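/- arXiv:1410.6800 — 3 statements merged into one kernel-verified Lean document; each statement's English description precedes it below -/
import Mathlib

section
/- Let I ⊆ ℝ be an interval, let f : I → ℝ be a strictly convex continuous function, let 𝓗 be a complex Hilbert space, and let (Hᵢ)_{i∈ι} be a net of self-adjoint bounded operators on 𝓗 with σ(Hᵢ) ⊆ I for all i. Suppose (Hᵢ) converges in the weak operator topology to a self-adjoint bounded operator H with σ(H) ⊆ I, and that (f(Hᵢ)) converges in the weak operator topology to f(H). Then for every bounded continuous function φ : I → ℝ, the net (φ(Hᵢ)) converges in the strong operator topology to φ(H). -/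
set_option synthInstance.maxHeartbeats 400000
set_option maxHeartbeats 800000

open scoped InnerProductSpace
open Filter Topology

/-!
If `m` is the slope of a supporting line of `f` at `t`, the nonnegative function
`tangentGap f m t` vanishes at `t` and, by strict convexity, is bounded below away from `t`. It
differs from `f` by an affine function, so its quadratic forms at `Hᵢ` converge to those at `T`: if
`w` is spectrally supported near `t` for `T`, then asymptotically it is so for `Hᵢ`.

On a window of a uniform mesh of `[a, b]`, the gap for the middle node is at most the second
difference of `f` over the window, and these second differences telescope to a sum tending to zero.
By Cauchy-Schwarz over the pieces of a vector `u` cut along the mesh, `g(Hᵢ) u → 0` whenever `u` is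
supported on `[a, b]` and the bounded function `g` vanishes near `[a, b]`.

Hence if `φ` is `K`-Lipschitz on `[a, b] ⊇ σ(T)`, a piece `w` supported on a window of size `δ`
around `t` satisfies `‖φ(Hᵢ) w - φ(t) w‖ ≤ K δ ‖w‖` asymptotically, and Cauchy-Schwarz over the
mesh, which has about `(b - a) / δ` windows, gives strong convergence. Polynomial approximation
removes the Lipschitz condition.
-/

section ConvexFunctions

/-- The second difference of `f` at the midpoint of `p` and `q`, which measures the convexity of `f`
between `p` and `q`. -/
noncomputable def secondDiff (f : ℝ → ℝ) (p q : ℝ) : ℝ :=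
  f p + f q - 2 * f ((p + q) / 2)

/-- The height of the graph of `f` at `x` above the line of slope `m` through `(t, f t)`. When `m`
is a subgradient of `f` at `t`, this is the Bregman divergence of `f`. -/
def tangentGap (f : ℝ → ℝ) (m t x : ℝ) : ℝ :=
  f x - (f t + m * (x - t))

variable {I : Set ℝ} {f : ℝ → ℝ}

lemma secondDiff_pos (hf : StrictConvexOn ℝ I f) {p q : ℝ} (hp : p ∈ I) (hq : q ∈ I)
    (hpq : p ≠ q) : 0 < secondDiff f p q := by
  have h := hf.2 hp hq hpq (half_pos one_pos) (half_pos one_pos) (add_halves 1)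
  simp only [smul_eq_mul] at h
  rw [show (1 / 2 : ℝ) * p + 1 / 2 * q = (p + q) / 2 by ring] at h
  unfold secondDiff
  linarith

lemma secondDiff_tangentGap (m t p q : ℝ) :
    secondDiff (tangentGap f m t) p q = secondDiff f p q := by
  unfold secondDiff tangentGap
  ring

lemma convexOn_tangentGap (hf : ConvexOn ℝ I f) (m t : ℝ) : ConvexOn ℝ I (tangentGap f m t) := by
  refine ⟨hf.1, fun x hx y hy r s hr hs hrs => ?_⟩
  have h := hf.2 hx hy hr hs hrs
  simp only [tangentGap, smul_eq_mul] at h ⊢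
  obtain rfl : s = 1 - r := by linarith
  linarith

lemma continuousOn_tangentGap (hf : ContinuousOn f I) (m t : ℝ) :
    ContinuousOn (tangentGap f m t) I :=
  hf.sub (by fun_prop)

lemma tangentGap_self (m t : ℝ) : tangentGap f m t t = 0 := by
  simp [tangentGap]

lemma exists_forall_tangentGap_nonneg (hf : ConvexOn ℝ I f) {t : ℝ} (ht : t ∈ interior I) :
    ∃ m, ∀ x ∈ I, 0 ≤ tangentGap f m t x := by
  refine ⟨derivWithin f (Set.Ioi t) t, fun x hx => ?_⟩
  unfold tangentGap
  rcases lt_trichotomy x t with hxt | rfl | htx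
  · have h := (hf.slope_le_leftDeriv_of_mem_interior hx ht hxt).trans
      (hf.leftDeriv_le_rightDeriv_of_mem_interior ht)
    rw [slope_def_field, div_le_iff₀ (sub_pos.2 hxt)] at h
    linarith
  · simp
  · have h := hf.rightDeriv_le_slope_of_mem_interior ht hx htx
    rw [slope_def_field, le_div_iff₀ (sub_pos.2 htx)] at h
    linarith

lemma tangentGap_midpoint_le_secondDiff (hf : ConvexOn ℝ I f) {m p q x : ℝ}
    (hm : ∀ y ∈ I, 0 ≤ tangentGap f m ((p + q) / 2) y) (hp : p ∈ I) (hq : q ∈ I)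
    (hx : x ∈ Set.Icc p q) :
    tangentGap f m ((p + q) / 2) x ≤ secondDiff f p q := by
  have hmax := (convexOn_tangentGap hf m ((p + q) / 2)).le_max_of_mem_Icc hp hq hx
  rw [← secondDiff_tangentGap m ((p + q) / 2), secondDiff, tangentGap_self]
  linarith [max_le_add_of_nonneg (hm p hp) (hm q hq)]

/- Moving away from the contact point `t`, the nonnegative convex function `tangentGap f m t`
increases, and it has the same second differences as `f`. -/
lemma secondDiff_le_tangentGap (hf : ConvexOn ℝ I f) {m t p q x : ℝ}
    (hm : ∀ y ∈ I, 0 ≤ tangentGap f m t y) (ht : t ∈ I) (hx : x ∈ I)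
    (hpqx : t ≤ p ∧ p ≤ q ∧ q ≤ x ∨ x ≤ q ∧ q ≤ p ∧ p ≤ t) :
    secondDiff f p q ≤ tangentGap f m t x := by
  have increasing : ∀ y z, z ∈ I → y ∈ segment ℝ t z → tangentGap f m t y ≤ tangentGap f m t z := by
    intro y z hz hy
    have h := (convexOn_tangentGap hf m t).le_max_of_mem_segment ht hz hy
    rwa [tangentGap_self, max_eq_right (hm z hz)] at h
  simp only [segment_eq_uIcc, Set.mem_uIcc] at increasing
  have hmid : (p + q) / 2 ∈ I := hf.1.segment_subset ht hx <| by
    rw [segment_eq_uIcc, Set.mem_uIcc]; grind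
  have hp := increasing p ((p + q) / 2) hmid (by grind)
  have hq := increasing q x hx (by grind)
  have hnonneg := hm _ hmid
  rw [← secondDiff_tangentGap m t, secondDiff]
  linarith

lemma exists_pos_forall_le_tangentGap (hf : StrictConvexOn ℝ I f) {a b : ℝ}
    (hab : Set.Icc a b ⊆ I) {V : Set ℝ} (hV : V ∈ 𝓝ˢ (Set.Icc a b)) :
    ∃ c > 0, ∀ m, ∀ t ∈ Set.Icc a b, (∀ x ∈ I, 0 ≤ tangentGap f m t x) →
      ∀ x ∈ I, x ∉ V → c ≤ tangentGap f m t x := by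
  rcases lt_or_ge b a with hba | hab'
  · exact ⟨1, one_pos, fun m t ht => by simp [hba.not_ge] at ht⟩
  have haI := hab (Set.left_mem_Icc.2 hab')
  have hbI := hab (Set.right_mem_Icc.2 hab')
  obtain ⟨a', ha', haV⟩ := exists_Ioc_subset_of_mem_nhds
    (mem_nhdsSet_iff_forall.1 hV a (Set.left_mem_Icc.2 hab')) (exists_lt a)
  obtain ⟨b', hb', hbV⟩ := exists_Ico_subset_of_mem_nhds
    (mem_nhdsSet_iff_forall.1 hV b (Set.right_mem_Icc.2 hab')) (exists_gt b)
  have pos : ∀ p ∈ I, ∀ q, p ≠ q → ∃ c > 0, q ∈ I → c ≤ secondDiff f p q := fun p hp q hpq => by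
    by_cases hq : q ∈ I
    · exact ⟨_, secondDiff_pos hf hp hq hpq, fun _ => le_rfl⟩
    · exact ⟨1, one_pos, fun h => absurd h hq⟩
  obtain ⟨c₁, hc₁, hleft⟩ := pos a haI a' ha'.ne'
  obtain ⟨c₂, hc₂, hright⟩ := pos b hbI b' hb'.ne
  refine ⟨min c₁ c₂, lt_min hc₁ hc₂, fun m t ht hm x hx hxV => ?_⟩
  have hxab : x ∉ Set.Icc a b := fun h => hxV (subset_of_mem_nhdsSet hV h)
  rcases lt_or_ge x a with hxa | hax
  · have hxa' : x ≤ a' := not_lt.1 fun h => hxV (haV ⟨h, hxa.le⟩)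
    have ha'I : a' ∈ I := hf.1.ordConnected.out hx haI ⟨hxa', ha'.le⟩
    exact ((min_le_left _ _).trans (hleft ha'I)).trans
      (secondDiff_le_tangentGap hf.convexOn hm (hab ht) hx (.inr ⟨hxa', ha'.le, ht.1⟩))
  · have hbx : b < x := not_le.1 fun h => hxab ⟨hax, h⟩
    have hb'x : b' ≤ x := not_lt.1 fun h => hxV (hbV ⟨hbx.le, h⟩)
    have hb'I : b' ∈ I := hf.1.ordConnected.out hbI hx ⟨hb'.le, hb'x⟩
    exact ((min_le_right _ _).trans (hright hb'I)).trans
      (secondDiff_le_tangentGap hf.convexOn hm (hab ht) hx (.inl ⟨ht.2, hb'.le, hb'x⟩))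

end ConvexFunctions

lemma exists_Icc_subset_of_isCompact {I K : Set ℝ} (hI : I.OrdConnected) (hnt : I.Nontrivial)
    (hK : IsCompact K) (hKI : K ⊆ I) :
    ∃ a b, a < b ∧ K ⊆ Set.Icc a b ∧ Set.Icc a b ⊆ I := by
  obtain ⟨x, hx, y, hy, hxy⟩ := hnt.exists_lt
  have hcompact : IsCompact (insert x (insert y K)) := (hK.insert y).insert x
  have hsub : insert x (insert y K) ⊆ I :=
    Set.insert_subset hx (Set.insert_subset hy hKI)
  have hne : (insert x (insert y K)).Nonempty := Set.insert_nonempty _ _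
  have hIcc : ∀ z ∈ insert x (insert y K), z ∈ Set.Icc (sInf (insert x (insert y K)))
      (sSup (insert x (insert y K))) := fun z hz =>
    ⟨csInf_le hcompact.bddBelow hz, le_csSup hcompact.bddAbove hz⟩
  exact ⟨_, _, (hIcc x (by simp)).1.trans_lt (hxy.trans_le (hIcc y (by simp)).2),
    fun z hz => hIcc z (.inr (.inr hz)),
    hI.out (hsub (hcompact.sInf_mem hne)) (hsub (hcompact.sSup_mem hne))⟩

lemma exists_continuousOn_abs_le_eventually_eq {I s : Set ℝ} {g : ℝ → ℝ} (hg : ContinuousOn g I)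
    (hsI : s ⊆ I) {ε ε' : ℝ} (hε' : 0 ≤ ε') (hεε' : ε < ε') (hgε : ∀ x ∈ s, |g x| ≤ ε) :
    ∃ h : ℝ → ℝ, ContinuousOn h I ∧ (∀ x, |h x| ≤ ε') ∧ ∀ᶠ x in 𝓝ˢ s, x ∈ I → g x = h x := by
  have hle : -ε' ≤ ε' := neg_le_self hε'
  refine ⟨fun x => Set.projIcc (-ε') ε' hle (g x), by fun_prop,
    fun x => abs_le.2 (Set.projIcc (-ε') ε' hle (g x)).2,
    eventually_nhdsSet_iff_forall.2 fun y hy => ?_⟩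
  have hlt : ∀ᶠ x in 𝓝[I] y, |g x| < ε' :=
    (hg y (hsI hy)).abs.eventually_lt_const ((hgε y hy).trans_lt hεε')
  filter_upwards [eventually_nhdsWithin_iff.1 hlt] with x hx hxI
  rw [Set.projIcc_of_mem hle (abs_le.1 (hx hxI).le)]

lemma exists_lipschitzOnWith_near {a b : ℝ} {φ : ℝ → ℝ}
    (hφ : ContinuousOn φ (Set.Icc a b)) {ε : ℝ} (hε : 0 < ε) :
    ∃ (q : ℝ → ℝ) (K : NNReal), Continuous q ∧ (∃ C, ∀ x, |q x| ≤ C) ∧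
      LipschitzOnWith K q (Set.Icc a b) ∧ ∀ x ∈ Set.Icc a b, |φ x - q x| ≤ ε := by
  rcases lt_or_ge b a with hba | hab
  · exact ⟨0, 0, continuous_const, ⟨0, by simp⟩, by simp [hba]⟩
  obtain ⟨p, hp⟩ := exists_polynomial_near_of_continuousOn a b φ hφ ε hε
  obtain ⟨C, hC⟩ := isCompact_Icc.exists_bound_of_continuousOn (s := Set.Icc a b)
    p.continuous.continuousOn
  have hsmooth : ContDiffOn ℝ 1 (fun x => p.eval x) (Set.Icc a b) := by
    simpa using (p.contDiff_aeval (𝕜 := ℝ) 1).contDiffOn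
  obtain ⟨K, hK⟩ := hsmooth.exists_lipschitzOnWith one_ne_zero (convex_Icc a b) isCompact_Icc
  let q (x : ℝ) : ℝ := p.eval (Set.projIcc a b hab x : ℝ)
  have hpq : ∀ x ∈ Set.Icc a b, q x = p.eval x := fun x hx => by
    simp only [q, Set.projIcc_of_mem hab hx]
  refine ⟨q, K, p.continuous.comp (continuous_subtype_val.comp continuous_projIcc),
    ⟨C, fun x => hC _ (Set.projIcc a b hab x).2⟩, fun x hx y hy => ?_, fun x hx => ?_⟩
  · rw [hpq x hx, hpq y hy]
    exact hK hx hy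
  · rw [hpq x hx, abs_sub_comm]
    exact (hp x hx).le

section Mesh

/-- The `k`-th node of the uniform subdivision of `[a, b]` into `n + 1` cells. -/
noncomputable def meshNode (a b : ℝ) (n k : ℕ) : ℝ :=
  a + k * ((b - a) / (n + 1))

/-- The window of two consecutive cells around the interior node `meshNode a b n (k + 1)`. -/
def meshWindow (a b : ℝ) (n k : ℕ) : Set ℝ :=
  Set.Icc (meshNode a b n k) (meshNode a b n (k + 2))

variable {a b : ℝ} {n k : ℕ}

lemma meshNode_zero : meshNode a b n 0 = a := by
  simp [meshNode]

lemma meshNode_last : meshNode a b n (n + 1) = b := by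
  unfold meshNode
  push_cast
  field_simp
  ring

lemma meshNode_add (j : ℕ) :
    meshNode a b n (k + j) = meshNode a b n k + j * ((b - a) / (n + 1)) := by
  unfold meshNode
  push_cast
  ring

lemma strictMono_meshNode (hab : a < b) : StrictMono (meshNode a b n) :=
  strictMono_nat_of_lt_succ fun k => by
    have : 0 < (b - a) / (n + 1) := div_pos (sub_pos.2 hab) (by positivity)
    rw [meshNode_add]
    simpa using this

lemma meshNode_mem_Icc (hab : a < b) (hk : k ≤ n + 1) : meshNode a b n k ∈ Set.Icc a b :=
  ⟨meshNode_zero.ge.trans ((strictMono_meshNode hab).monotone k.zero_le),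
    ((strictMono_meshNode hab).monotone hk).trans meshNode_last.le⟩

lemma meshNode_midpoint :
    (meshNode a b n k + meshNode a b n (k + 2)) / 2 = meshNode a b n (k + 1) := by
  rw [meshNode_add, meshNode_add]
  push_cast
  ring

lemma meshWindow_subset_Icc (hab : a < b) (hk : k < n) : meshWindow a b n k ⊆ Set.Icc a b :=
  Set.Icc_subset_Icc (meshNode_mem_Icc hab (by lia)).1 (meshNode_mem_Icc hab (by lia)).2

lemma exists_tangentGap_meshNode_le {I : Set ℝ} {f : ℝ → ℝ} (hf : ConvexOn ℝ I f) (hab : a < b)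
    (habI : Set.Icc a b ⊆ I) (hk : k < n) :
    ∃ m, (∀ x ∈ I, 0 ≤ tangentGap f m (meshNode a b n (k + 1)) x) ∧
      ∀ x ∈ meshWindow a b n k, tangentGap f m (meshNode a b n (k + 1)) x ≤
        secondDiff f (meshNode a b n k) (meshNode a b n (k + 2)) := by
  have hinterior : meshNode a b n (k + 1) ∈ interior I := interior_mono habI <| by
    rw [interior_Icc]
    exact ⟨meshNode_zero.ge.trans_lt (strictMono_meshNode hab (by lia)),
      (strictMono_meshNode hab (by lia)).trans_eq meshNode_last⟩
  obtain ⟨m, hm⟩ := exists_forall_tangentGap_nonneg hf hinterior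
  refine ⟨m, hm, fun x hx => ?_⟩
  rw [← meshNode_midpoint] at hm ⊢
  exact tangentGap_midpoint_le_secondDiff hf hm (habI (meshNode_mem_Icc hab (by lia)))
    (habI (meshNode_mem_Icc hab (by lia))) hx

lemma abs_sub_meshNode_le {x : ℝ} (hx : x ∈ meshWindow a b n k) :
    |x - meshNode a b n (k + 1)| ≤ (b - a) / (n + 1) := by
  rw [meshWindow, meshNode_add, Set.mem_Icc] at hx
  rw [meshNode_add, abs_le]
  push_cast at hx ⊢
  constructor <;> linarith

lemma tendsto_meshSize : Tendsto (fun n : ℕ => (b - a) / (n + 1)) atTop (𝓝 0) := by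
  simpa [div_eq_mul_inv] using
    (tendsto_one_div_add_atTop_nhds_zero_nat (𝕜 := ℝ)).const_mul (b - a)

lemma tendsto_sum_sq_meshSize (K : ℝ) :
    Tendsto (fun n : ℕ => ∑ _k ∈ Finset.range n, (K * ((b - a) / (n + 1))) ^ 2) atTop (𝓝 0) := by
  have h := (tendsto_natCast_div_add_atTop (1 : ℝ)).mul
    ((tendsto_meshSize (a := a) (b := b)).const_mul (K ^ 2 * (b - a)))
  rw [mul_zero, mul_zero] at h
  refine h.congr fun n => ?_
  rw [Finset.sum_const, Finset.card_range, nsmul_eq_mul]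
  ring

lemma sum_secondDiff_meshNode (f : ℝ → ℝ) :
    ∑ k ∈ Finset.range n, secondDiff f (meshNode a b n k) (meshNode a b n (k + 2)) =
      (f b - f (meshNode a b n n)) - (f (meshNode a b n 1) - f a) := by
  let increment (k : ℕ) := f (meshNode a b n (k + 1)) - f (meshNode a b n k)
  calc ∑ k ∈ Finset.range n, secondDiff f (meshNode a b n k) (meshNode a b n (k + 2))
      = ∑ k ∈ Finset.range n, (increment (k + 1) - increment k) :=
        Finset.sum_congr rfl fun k _ => by
          simp only [secondDiff, meshNode_midpoint, increment]
          ring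
    _ = (f b - f (meshNode a b n n)) - (f (meshNode a b n 1) - f a) := by
        rw [Finset.sum_range_sub]
        simp only [increment, meshNode_zero, meshNode_last, zero_add]

lemma tendsto_sum_secondDiff_meshNode {f : ℝ → ℝ} (hab : a < b)
    (hf : ContinuousOn f (Set.Icc a b)) :
    Tendsto (fun n : ℕ => ∑ k ∈ Finset.range n,
      secondDiff f (meshNode a b n k) (meshNode a b n (k + 2))) atTop (𝓝 0) := by
  have comp_node : ∀ k : ℕ → ℕ, (∀ n, k n ≤ n + 1) → ∀ x ∈ Set.Icc a b,
      Tendsto (fun n => meshNode a b n (k n)) atTop (𝓝 x) →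
      Tendsto (fun n => f (meshNode a b n (k n))) atTop (𝓝 (f x)) := fun k hk x hx hlim =>
    (hf x hx).tendsto.comp <| tendsto_nhdsWithin_iff.2
      ⟨hlim, .of_forall fun n => meshNode_mem_Icc hab (hk n)⟩
  have first : Tendsto (fun n : ℕ => meshNode a b n 1) atTop (𝓝 a) := by
    simpa [meshNode] using tendsto_meshSize.const_add a
  have last : Tendsto (fun n : ℕ => meshNode a b n n) atTop (𝓝 b) := by
    have h : ∀ n : ℕ, meshNode a b n n = b - (b - a) / (n + 1) := fun n => by
      have h := meshNode_add (a := a) (b := b) (n := n) (k := n) 1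
      rw [meshNode_last, Nat.cast_one, one_mul] at h
      exact eq_sub_of_add_eq h.symm
    simpa [h] using tendsto_meshSize.const_sub b
  simp_rw [sum_secondDiff_meshNode]
  simpa using ((comp_node (fun n => n) (by simp) b (Set.right_mem_Icc.2 hab.le) last).const_sub
    (f b)).sub ((comp_node (fun _ => 1) (by simp) a (Set.left_mem_Icc.2 hab.le) first).sub_const
    (f a))

lemma mem_meshWindow_iff (hab : a < b) {x : ℝ} :
    x ∈ meshWindow a b n k ↔ (x - a) / ((b - a) / (n + 1)) ∈ Set.Icc (k : ℝ) (k + 2) := by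
  have hδ : 0 < (b - a) / (n + 1) := div_pos (sub_pos.2 hab) (by positivity)
  simp only [meshWindow, meshNode, Set.mem_Icc, le_div_iff₀ hδ, div_le_iff₀ hδ, le_sub_iff_add_le',
    sub_le_iff_le_add']
  push_cast
  rfl

lemma exists_partition_of_unity_meshWindow (hab : a < b) (hn : 1 ≤ n) :
    ∃ P : ℕ → ℝ → ℝ, (∀ k, Continuous (P k)) ∧ (∀ k x, 0 ≤ P k x) ∧
      (∀ x, ∑ k ∈ Finset.range n, P k x = 1) ∧
      ∀ k < n, ∀ x ∈ Set.Icc a b, P k x ≠ 0 → x ∈ meshWindow a b n k := by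
  let ramp (s : ℝ) : ℝ := max 0 (min 1 s)
  -- Clamping the mesh coordinate to `[1, n]` makes the outer hats constant in the outer cells.
  let coord (x : ℝ) : ℝ := max 1 (min n ((x - a) / ((b - a) / (n + 1))))
  have ramp_mono : Monotone ramp := fun s t hst => by
    simp only [ramp]; gcongr
  have coord_mem : ∀ x, coord x ∈ Set.Icc (1 : ℝ) n := fun x =>
    ⟨le_max_left _ _, max_le (by exact_mod_cast hn) (min_le_left _ _)⟩
  refine ⟨fun k x => ramp (coord x - k) - ramp (coord x - (k + 1 : ℕ)), fun k => by fun_prop,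
    fun k x => sub_nonneg.2 (ramp_mono (by push_cast; linarith)), fun x => ?_,
    fun k hk x hx hne => ?_⟩
  · rw [Finset.sum_range_sub' fun k : ℕ => ramp (coord x - k)]
    obtain ⟨h1, h2⟩ := coord_mem x
    simp [ramp, h1, h2]
  · have hk_lt : (k : ℝ) < coord x := by
      by_contra! h
      exact hne (by simp only [ramp]; push_cast; grind)
    have hlt_k : coord x < k + 2 := by
      by_contra! h
      exact hne (by simp only [ramp]; push_cast; grind)
    have hδ : 0 < (b - a) / (n + 1) := div_pos (sub_pos.2 hab) (by positivity)
    have hx0 : 0 ≤ (x - a) / ((b - a) / (n + 1)) := div_nonneg (sub_nonneg.2 hx.1) hδ.le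
    have hxn : (x - a) / ((b - a) / (n + 1)) ≤ n + 1 := by
      rw [div_le_iff₀ hδ, mul_div_cancel₀ _ (by positivity)]
      linarith [hx.2]
    have hk0 : (k : ℝ) = 0 ∨ (1 : ℝ) ≤ k := by
      exact_mod_cast k.eq_zero_or_pos
    have hkn : (n : ℝ) = k + 1 ∨ (k : ℝ) + 2 ≤ n := by
      exact_mod_cast (by lia : n = k + 1 ∨ k + 2 ≤ n)
    rw [mem_meshWindow_iff hab]
    simp only [coord, lt_max_iff, max_lt_iff, lt_min_iff, min_lt_iff] at hk_lt hlt_k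
    generalize (x - a) / ((b - a) / (n + 1)) = s at *
    constructor
    · rcases hk0 with h | h <;> grind
    · rcases hkn with h | h <;> grind

end Mesh

section FunctionalCalculus

variable {𝓗 : Type*} [NormedAddCommGroup 𝓗] [InnerProductSpace ℂ 𝓗] [CompleteSpace 𝓗]
  {T : 𝓗 →L[ℂ] 𝓗} {g h : ℝ → ℝ}

lemma reApplyInnerSelf_cfc_mono (hg : ContinuousOn g (spectrum ℝ T))
    (hh : ContinuousOn h (spectrum ℝ T)) (hgh : ∀ x ∈ spectrum ℝ T, g x ≤ h x) (u : 𝓗) :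
    (cfc g T).reApplyInnerSelf u ≤ (cfc h T).reApplyInnerSelf u := by
  have hle := (ContinuousLinearMap.le_def _ _).1 (cfc_mono hgh hg hh)
  simpa [ContinuousLinearMap.reApplyInnerSelf_apply, inner_sub_left] using
    hle.re_inner_nonneg_left u

lemma norm_cfc_apply_sq (hg : ContinuousOn g (spectrum ℝ T)) (u : 𝓗) :
    ‖cfc g T u‖ ^ 2 = (cfc (fun x => g x ^ 2) T).reApplyInnerSelf u := by
  have hsymm := (cfc_predicate g T : IsSelfAdjoint _).isSymmetric (cfc g T u) u
  rw [ContinuousLinearMap.coe_coe] at hsymm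
  simp only [pow_two (g _)]
  rw [ContinuousLinearMap.reApplyInnerSelf_apply, cfc_mul g g T, mul_apply_eq_comp, hsymm,
    inner_self_eq_norm_sq]

lemma cfc_sub_const_apply (hT : IsSelfAdjoint T) (hg : ContinuousOn g (spectrum ℝ T)) (r : ℝ)
    (u : 𝓗) : cfc (fun x => g x - r) T u = cfc g T u - r • u := by
  rw [cfc_sub g (fun _ => r) T, cfc_const r T]
  simp [Algebra.algebraMap_eq_smul_one]

lemma norm_cfc_apply_le {ε : ℝ} (hε : 0 ≤ ε) (hgε : ∀ x ∈ spectrum ℝ T, |g x| ≤ ε) (u : 𝓗) :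
    ‖cfc g T u‖ ≤ ε * ‖u‖ :=
  ContinuousLinearMap.le_of_opNorm_le _ (norm_cfc_le hε hgε) u

section PartitionOfUnity

variable {κ : Type*} {s : Finset κ} {P : κ → ℝ → ℝ}

lemma sum_cfc_apply_eq_self (hT : IsSelfAdjoint T)
    (hP : ∀ k ∈ s, ContinuousOn (P k) (spectrum ℝ T))
    (hsum : ∀ x ∈ spectrum ℝ T, ∑ k ∈ s, P k x = 1) (u : 𝓗) :
    ∑ k ∈ s, cfc (P k) T u = u := by
  have h : ∑ k ∈ s, cfc (P k) T = 1 := by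
    rw [← cfc_sum P T s hP, ← cfc_one ℝ T]
    exact cfc_congr fun x hx => by simpa using hsum x hx
  rw [← sum_apply, h, one_apply_eq_self]

lemma sum_norm_cfc_apply_sq_le (hT : IsSelfAdjoint T)
    (hP : ∀ k ∈ s, ContinuousOn (P k) (spectrum ℝ T)) (hP0 : ∀ k ∈ s, ∀ x, 0 ≤ P k x)
    (hsum : ∀ x ∈ spectrum ℝ T, ∑ k ∈ s, P k x = 1) (u : 𝓗) :
    ∑ k ∈ s, ‖cfc (P k) T u‖ ^ 2 ≤ ‖u‖ ^ 2 := by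
  have hP1 : ∀ k ∈ s, ∀ x ∈ spectrum ℝ T, P k x ≤ 1 := fun k hk x hx =>
    (Finset.single_le_sum (fun j hj => hP0 j hj x) hk).trans_eq (hsum x hx)
  calc ∑ k ∈ s, ‖cfc (P k) T u‖ ^ 2
      ≤ ∑ k ∈ s, (cfc (P k) T).reApplyInnerSelf u := by
        refine Finset.sum_le_sum fun k hk => ?_
        rw [norm_cfc_apply_sq (hP k hk)]
        exact reApplyInnerSelf_cfc_mono ((hP k hk).pow 2) (hP k hk) (fun x hx =>
          pow_le_of_le_one (hP0 k hk x) (hP1 k hk x hx) two_ne_zero) u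
    _ = ‖u‖ ^ 2 := by
        simp only [ContinuousLinearMap.reApplyInnerSelf_apply]
        rw [← map_sum, ← sum_inner, sum_cfc_apply_eq_self hT hP hsum, inner_self_eq_norm_sq]

end PartitionOfUnity

/-- The vector `u` is localized on `s` in the spectral representation of `T`, which is expressed
without a projection-valued measure: every continuous function vanishing on `s` annihilates `u`. -/
def IsSpectrallySupportedOn (T : 𝓗 →L[ℂ] 𝓗) (s : Set ℝ) (u : 𝓗) : Prop :=
  ∀ g : ℝ → ℝ, ContinuousOn g (spectrum ℝ T) → (∀ x ∈ spectrum ℝ T ∩ s, g x = 0) → cfc g T u = 0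

lemma isSpectrallySupportedOn_of_spectrum_subset {s : Set ℝ} (hs : spectrum ℝ T ⊆ s) (u : 𝓗) :
    IsSpectrallySupportedOn T s u := fun g _ hg => by
  rw [cfc_congr (g := fun _ => 0) fun x hx => hg x ⟨hx, hs hx⟩, cfc_const_zero, zero_apply]

namespace IsSpectrallySupportedOn

variable {s : Set ℝ} {u : 𝓗}

lemma cfc_apply_congr (hu : IsSpectrallySupportedOn T s u) (hg : ContinuousOn g (spectrum ℝ T))
    (hh : ContinuousOn h (spectrum ℝ T)) (hgh : Set.EqOn g h (spectrum ℝ T ∩ s)) :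
    cfc g T u = cfc h T u := by
  have hzero := hu (fun x => g x - h x) (hg.sub hh) fun x hx => sub_eq_zero.2 (hgh hx)
  rwa [cfc_sub g h T, sub_apply, sub_eq_zero] at hzero

lemma norm_cfc_apply_le (hu : IsSpectrallySupportedOn T s u) {ε : ℝ} (hε : 0 ≤ ε)
    (hg : ContinuousOn g (spectrum ℝ T)) (hgε : ∀ x ∈ s, |g x| ≤ ε) :
    ‖cfc g T u‖ ≤ ε * ‖u‖ := by
  have hεε : -ε ≤ ε := neg_le_self hε
  rw [hu.cfc_apply_congr hg (h := fun x => Set.projIcc (-ε) ε hεε (g x)) (by fun_prop)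
    fun x hx => by simp only [Set.projIcc_of_mem hεε (abs_le.1 (hgε x hx.2))]]
  exact _root_.norm_cfc_apply_le hε
    (fun x _ => abs_le.2 (Set.projIcc (-ε) ε hεε (g x)).2) u

lemma cfc_apply (hu : IsSpectrallySupportedOn T s u) {P : ℝ → ℝ}
    (hP : ContinuousOn P (spectrum ℝ T)) {t : Set ℝ} (hPt : ∀ x ∈ s, P x ≠ 0 → x ∈ t) :
    IsSpectrallySupportedOn T t (cfc P T u) := fun g hg hgt => by
  rw [← mul_apply_eq_comp, ← cfc_mul g P T]
  refine hu _ (hg.mul hP) fun x ⟨hxT, hxs⟩ => ?_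
  by_cases hPx : P x = 0
  · rw [hPx, mul_zero]
  · rw [hgt x ⟨hxT, hPt x hxs hPx⟩, zero_mul]

end IsSpectrallySupportedOn

lemma exists_meshWindow_decomposition (hT : IsSelfAdjoint T) {a b : ℝ} (hab : a < b) {u : 𝓗}
    (hu : IsSpectrallySupportedOn T (Set.Icc a b) u) {n : ℕ} (hn : 1 ≤ n) :
    ∃ w : ℕ → 𝓗, ∑ k ∈ Finset.range n, w k = u ∧ ∑ k ∈ Finset.range n, ‖w k‖ ^ 2 ≤ ‖u‖ ^ 2 ∧
      ∀ k < n, IsSpectrallySupportedOn T (meshWindow a b n k) (w k) := by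
  obtain ⟨P, hPc, hP0, hPsum, hPsupp⟩ := exists_partition_of_unity_meshWindow hab hn
  exact ⟨fun k => cfc (P k) T u,
    sum_cfc_apply_eq_self hT (fun k _ => (hPc k).continuousOn) (fun x _ => hPsum x) u,
    sum_norm_cfc_apply_sq_le hT (fun k _ => (hPc k).continuousOn) (fun k _ => hP0 k)
      (fun x _ => hPsum x) u,
    fun k hk => hu.cfc_apply (hPc k).continuousOn (hPsupp k hk)⟩

/- Splitting `u` along the mesh, the errors of the pieces add up by the Cauchy-Schwarz inequality,
because the squares of the norms of the pieces have bounded sum. -/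
lemma tendsto_apply_zero_of_meshWindow {ι : Type*} {l : Filter ι} (hT : IsSelfAdjoint T) {a b : ℝ}
    (hab : a < b) {u : 𝓗} (hu : IsSpectrallySupportedOn T (Set.Icc a b) u)
    {A : ι → 𝓗 →L[ℂ] 𝓗} {c : ℕ → ℕ → ℝ}
    (hc : Tendsto (fun n => ∑ k ∈ Finset.range n, c n k ^ 2) atTop (𝓝 0))
    (hA : ∀ n, ∀ k < n, ∀ w, IsSpectrallySupportedOn T (meshWindow a b n k) w →
      ∀ η, c n k * ‖w‖ < η → ∀ᶠ i in l, ‖A i w‖ < η) :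
    Tendsto (fun i => A i u) l (𝓝 0) := by
  rw [NormedAddGroup.tendsto_nhds_zero]
  intro ε hε
  have hlim : Tendsto (fun n => √(∑ k ∈ Finset.range n, c n k ^ 2) * ‖u‖) atTop (𝓝 0) := by
    simpa using hc.sqrt.mul_const ‖u‖
  obtain ⟨n, hnε, hn⟩ := ((hlim.eventually_lt_const hε).and (eventually_ge_atTop 1)).exists
  obtain ⟨w, hw_sum, hw_sq, hw_supp⟩ := exists_meshWindow_decomposition hT hab hu hn
  have hsum_lt : ∑ k ∈ Finset.range n, c n k * ‖w k‖ < ε :=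
    calc ∑ k ∈ Finset.range n, c n k * ‖w k‖
        ≤ √(∑ k ∈ Finset.range n, c n k ^ 2) * √(∑ k ∈ Finset.range n, ‖w k‖ ^ 2) :=
          Real.sum_mul_le_sqrt_mul_sqrt _ _ _
      _ ≤ √(∑ k ∈ Finset.range n, c n k ^ 2) * ‖u‖ := by
          gcongr
          exact Real.sqrt_le_iff.2 ⟨norm_nonneg u, hw_sq⟩
      _ < ε := hnε
  obtain ⟨τ, hτ, hτε⟩ : ∃ τ > 0, ∑ k ∈ Finset.range n, (c n k * ‖w k‖ + τ) = ε := by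
    have hn0 : (0 : ℝ) < n := by exact_mod_cast hn
    refine ⟨(ε - ∑ k ∈ Finset.range n, c n k * ‖w k‖) / n, div_pos (sub_pos.2 hsum_lt) hn0, ?_⟩
    rw [Finset.sum_add_distrib, Finset.sum_const, Finset.card_range, nsmul_eq_mul,
      mul_div_cancel₀ _ hn0.ne', add_sub_cancel]
  have hpieces : ∀ᶠ i in l, ∀ k ∈ Finset.range n, ‖A i (w k)‖ < c n k * ‖w k‖ + τ :=
    (Finset.eventually_all _).2 fun k hk =>
      hA n k (Finset.mem_range.1 hk) (w k) (hw_supp k (Finset.mem_range.1 hk)) _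
        (lt_add_of_pos_right _ hτ)
  filter_upwards [hpieces] with i hi
  calc ‖A i u‖ = ‖∑ k ∈ Finset.range n, A i (w k)‖ := by rw [← map_sum, hw_sum]
    _ ≤ ∑ k ∈ Finset.range n, ‖A i (w k)‖ := norm_sum_le _ _
    _ < ∑ k ∈ Finset.range n, (c n k * ‖w k‖ + τ) :=
        Finset.sum_lt_sum_of_nonempty (Finset.nonempty_range_iff.2 (by lia)) hi
    _ = ε := hτε

end FunctionalCalculus

section StrongConvergence

variable {𝓗 : Type*} [NormedAddCommGroup 𝓗] [InnerProductSpace ℂ 𝓗] [CompleteSpace 𝓗]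
  {ι : Type*} {l : Filter ι} {I : Set ℝ} {f : ℝ → ℝ} {H : ι → 𝓗 →L[ℂ] 𝓗} {T : 𝓗 →L[ℂ] 𝓗}

lemma reApplyInnerSelf_cfc_tangentGap {S : 𝓗 →L[ℂ] 𝓗} (hS : IsSelfAdjoint S)
    (hf : ContinuousOn f (spectrum ℝ S)) (m t : ℝ) (u : 𝓗) :
    (cfc (tangentGap f m t) S).reApplyInnerSelf u =
      (cfc f S).reApplyInnerSelf u - m * S.reApplyInnerSelf u - (f t - m * t) * ‖u‖ ^ 2 := by
  have hgap : tangentGap f m t = fun x => (f x - m * x) - (f t - m * t) := by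
    ext x
    unfold tangentGap
    ring
  have hlin : cfc (fun x => f x - m * x) S = cfc f S - m • S := by
    rw [cfc_sub f (fun x => m * x) S, cfc_const_mul_id m S]
  rw [hgap, ContinuousLinearMap.reApplyInnerSelf_apply, cfc_sub_const_apply hS (by fun_prop), hlin]
  simp [ContinuousLinearMap.reApplyInnerSelf_apply, inner_sub_left, inner_smul_left_eq_smul,
    inner_self_eq_norm_sq_to_K, ← Complex.ofReal_pow]

/-- The hypotheses on a net `H` of self-adjoint operators and its limit `T`, all with spectrum in
`I`: the quadratic forms of `H` and of `f(H)` converge to those of `T` and of `f(T)`, where `f` is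
strictly convex and continuous on `I`. -/
structure StrictConvexTest (l : Filter ι) (I : Set ℝ) (f : ℝ → ℝ) (H : ι → 𝓗 →L[ℂ] 𝓗)
    (T : 𝓗 →L[ℂ] 𝓗) : Prop where
  strictConvexOn : StrictConvexOn ℝ I f
  continuousOn : ContinuousOn f I
  isSelfAdjoint : ∀ i, IsSelfAdjoint (H i)
  spectrum_subset : ∀ i, spectrum ℝ (H i) ⊆ I
  isSelfAdjoint_limit : IsSelfAdjoint T
  spectrum_limit_subset : spectrum ℝ T ⊆ I
  tendsto_reApplyInnerSelf : ∀ u,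
    Tendsto (fun i => (H i).reApplyInnerSelf u) l (𝓝 (T.reApplyInnerSelf u))
  tendsto_reApplyInnerSelf_cfc : ∀ u,
    Tendsto (fun i => (cfc f (H i)).reApplyInnerSelf u) l (𝓝 ((cfc f T).reApplyInnerSelf u))

namespace StrictConvexTest

variable {u : 𝓗} {a b : ℝ}

lemma tendsto_reApplyInnerSelf_cfc_tangentGap (hH : StrictConvexTest l I f H T) (m t : ℝ) (u : 𝓗) :
    Tendsto (fun i => (cfc (tangentGap f m t) (H i)).reApplyInnerSelf u) l
      (𝓝 ((cfc (tangentGap f m t) T).reApplyInnerSelf u)) := by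
  simp only [reApplyInnerSelf_cfc_tangentGap hH.isSelfAdjoint_limit
      (hH.continuousOn.mono hH.spectrum_limit_subset),
    fun i => reApplyInnerSelf_cfc_tangentGap (hH.isSelfAdjoint i)
      (hH.continuousOn.mono (hH.spectrum_subset i))]
  exact ((hH.tendsto_reApplyInnerSelf_cfc u).sub
    ((hH.tendsto_reApplyInnerSelf u).const_mul m)).sub_const _

lemma eventually_norm_cfc_apply_lt_of_sq_le_tangentGap (hH : StrictConvexTest l I f H T)
    {s : Set ℝ} (hu : IsSpectrallySupportedOn T s u) {g : ℝ → ℝ} (hg : ContinuousOn g I)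
    {K D m t : ℝ} (hK : 0 ≤ K) (hD : 0 ≤ D) (hgK : ∀ x ∈ I, g x ^ 2 ≤ K * tangentGap f m t x)
    (hsD : ∀ x ∈ s, |tangentGap f m t x| ≤ D) {η : ℝ} (hη : √(K * D) * ‖u‖ < η) :
    ∀ᶠ i in l, ‖cfc g (H i) u‖ < η := by
  have hgap := continuousOn_tangentGap hH.continuousOn m t
  have hη0 : 0 < η := hη.trans_le' (by positivity)
  have hlimit : K * (cfc (tangentGap f m t) T).reApplyInnerSelf u < η ^ 2 :=
    calc K * (cfc (tangentGap f m t) T).reApplyInnerSelf u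
        ≤ K * (D * ‖u‖ * ‖u‖) := by
          gcongr
          refine (re_inner_le_norm _ _).trans ?_
          gcongr
          exact hu.norm_cfc_apply_le hD (hgap.mono hH.spectrum_limit_subset) hsD
      _ = (√(K * D) * ‖u‖) ^ 2 := by
          rw [mul_pow, Real.sq_sqrt (mul_nonneg hK hD)]
          ring
      _ < η ^ 2 := by gcongr
  have hconv := (hH.tendsto_reApplyInnerSelf_cfc_tangentGap m t u).const_mul K
  filter_upwards [hconv.eventually_lt_const hlimit] with i hi
  have hgap_i := hgap.mono (hH.spectrum_subset i)
  refine lt_of_pow_lt_pow_left₀ 2 hη0.le (hi.trans_le' ?_)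
  calc ‖cfc g (H i) u‖ ^ 2
      = (cfc (fun x => g x ^ 2) (H i)).reApplyInnerSelf u :=
        norm_cfc_apply_sq (hg.mono (hH.spectrum_subset i)) u
    _ ≤ (cfc (fun x => K * tangentGap f m t x) (H i)).reApplyInnerSelf u :=
        reApplyInnerSelf_cfc_mono ((hg.mono (hH.spectrum_subset i)).pow 2) (hgap_i.const_mul K)
          (fun x hx => hgK x (hH.spectrum_subset i hx)) u
    _ = K * (cfc (tangentGap f m t) (H i)).reApplyInnerSelf u := by
        rw [cfc_const_mul K _ (H i)]
        simp [ContinuousLinearMap.reApplyInnerSelf_apply, inner_smul_left_eq_smul]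

lemma tendsto_cfc_apply_zero (hH : StrictConvexTest l I f H T) (hab : a < b)
    (habI : Set.Icc a b ⊆ I) (hu : IsSpectrallySupportedOn T (Set.Icc a b) u) {g : ℝ → ℝ}
    (hg : ContinuousOn g I) (hgb : ∃ C, ∀ x ∈ I, |g x| ≤ C)
    (hg0 : ∀ᶠ x in 𝓝ˢ (Set.Icc a b), x ∈ I → g x = 0) :
    Tendsto (fun i => cfc g (H i) u) l (𝓝 0) := by
  obtain ⟨C, hC⟩ := hgb
  obtain ⟨c, hc, hgap⟩ := exists_pos_forall_le_tangentGap hH.strictConvexOn habI hg0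
  have hconvex := hH.strictConvexOn.convexOn
  let D (n k : ℕ) : ℝ := secondDiff f (meshNode a b n k) (meshNode a b n (k + 2))
  have node_mem : ∀ {n k}, k ≤ n + 1 → meshNode a b n k ∈ I := fun hk =>
    habI (meshNode_mem_Icc hab hk)
  have hD : ∀ {n k}, k < n → 0 < D n k := fun hk =>
    secondDiff_pos hH.strictConvexOn (node_mem (by lia)) (node_mem (by lia))
      (strictMono_meshNode hab (by lia)).ne
  have hsum : Tendsto (fun n => ∑ k ∈ Finset.range n, √(C ^ 2 / c * D n k) ^ 2) atTop (𝓝 0) := by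
    have h :=
      (tendsto_sum_secondDiff_meshNode hab (hH.continuousOn.mono habI)).const_mul (C ^ 2 / c)
    rw [mul_zero] at h
    refine h.congr fun n => ?_
    rw [Finset.mul_sum]
    refine Finset.sum_congr rfl fun k hk => (Real.sq_sqrt ?_).symm
    have := hD (Finset.mem_range.1 hk)
    positivity
  refine tendsto_apply_zero_of_meshWindow hH.isSelfAdjoint_limit hab hu hsum
    fun n k hk w hw η hη => ?_
  obtain ⟨m, hm, hmD⟩ := exists_tangentGap_meshNode_le hconvex hab habI hk
  refine hH.eventually_norm_cfc_apply_lt_of_sq_le_tangentGap hw hg (m := m)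
    (t := meshNode a b n (k + 1)) (by positivity) (hD hk).le (fun x hx => ?_) (fun x hx => ?_) hη
  · by_cases hgx : x ∈ {x | x ∈ I → g x = 0}
    · rw [hgx hx, zero_pow two_ne_zero]
      exact mul_nonneg (by positivity) (hm x hx)
    · calc g x ^ 2 ≤ C ^ 2 := sq_le_sq.2 ((hC x hx).trans (le_abs_self C))
        _ = C ^ 2 / c * c := by field_simp
        _ ≤ C ^ 2 / c * tangentGap f m (meshNode a b n (k + 1)) x := by
          gcongr
          exact hgap m _ (meshNode_mem_Icc hab (by lia)) hm x hx hgx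
  · rw [abs_of_nonneg (hm x (habI (meshWindow_subset_Icc hab hk hx)))]
    exact hmD x hx

lemma eventually_norm_cfc_apply_lt (hH : StrictConvexTest l I f H T) (hab : a < b)
    (habI : Set.Icc a b ⊆ I) (hu : IsSpectrallySupportedOn T (Set.Icc a b) u) {g : ℝ → ℝ}
    (hg : ContinuousOn g I) (hgb : ∃ C, ∀ x ∈ I, |g x| ≤ C) {ε η : ℝ}
    (hgε : ∀ x ∈ Set.Icc a b, |g x| ≤ ε) (hη : ε * ‖u‖ < η) :
    ∀ᶠ i in l, ‖cfc g (H i) u‖ < η := by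
  have hε : 0 ≤ ε := (abs_nonneg _).trans (hgε a (Set.left_mem_Icc.2 hab.le))
  obtain ⟨ε', hεε', hε'η⟩ : ∃ ε', ε < ε' ∧ ε' * ‖u‖ < η :=
    (((continuous_mul_const ‖u‖).tendsto ε).eventually_lt_const hη).exists_gt
  have hε' : 0 ≤ ε' := hε.trans hεε'.le
  obtain ⟨h, hh, hhε', hgh⟩ := exists_continuousOn_abs_le_eventually_eq hg habI hε' hεε' hgε
  have htail : Tendsto (fun i => ‖cfc (fun x => g x - h x) (H i) u‖) l (𝓝 ‖(0 : 𝓗)‖) := by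
    obtain ⟨C, hC⟩ := hgb
    refine (hH.tendsto_cfc_apply_zero hab habI hu (hg.sub hh)
      ⟨C + ε', fun x hx => (abs_sub _ _).trans (add_le_add (hC x hx) (hhε' x))⟩ ?_).norm
    exact hgh.mono fun x hx hxI => sub_eq_zero.2 (hx hxI)
  rw [norm_zero] at htail
  filter_upwards [htail.eventually_lt_const (sub_pos.2 hε'η)] with i hi
  have hsplit : cfc (fun x => g x - h x) (H i) u = cfc g (H i) u - cfc h (H i) u := by
    rw [cfc_sub g h (H i) (hg.mono (hH.spectrum_subset i)) (hh.mono (hH.spectrum_subset i)),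
      sub_apply]
  calc ‖cfc g (H i) u‖
      ≤ ‖cfc (fun x => g x - h x) (H i) u‖ + ‖cfc h (H i) u‖ := by
        rw [hsplit, add_comm]
        exact norm_le_norm_add_norm_sub' _ _
    _ < (η - ε' * ‖u‖) + ε' * ‖u‖ :=
        add_lt_add_of_lt_of_le hi (norm_cfc_apply_le hε' (fun x _ => hhε' x) u)
    _ = η := sub_add_cancel _ _

lemma tendsto_cfc_apply_of_lipschitzOnWith (hH : StrictConvexTest l I f H T) (hab : a < b)
    (habI : Set.Icc a b ⊆ I) (hu : IsSpectrallySupportedOn T (Set.Icc a b) u) {φ : ℝ → ℝ}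
    (hφ : ContinuousOn φ I) (hφb : ∃ C, ∀ x ∈ I, |φ x| ≤ C) {K : NNReal}
    (hK : LipschitzOnWith K φ (Set.Icc a b)) :
    Tendsto (fun i => cfc φ (H i) u) l (𝓝 (cfc φ T u)) := by
  rw [← tendsto_sub_nhds_zero_iff]
  obtain ⟨C, hC⟩ := hφb
  have hφT := hφ.mono hH.spectrum_limit_subset
  refine tendsto_apply_zero_of_meshWindow (A := fun i => cfc φ (H i) - cfc φ T)
    (c := fun n _ => 2 * K * ((b - a) / (n + 1))) hH.isSelfAdjoint_limit hab hu
    (tendsto_sum_sq_meshSize (2 * K)) fun n k hk w hw η hη => ?_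
  set t := meshNode a b n (k + 1)
  set ω := K * ((b - a) / (n + 1)) with hω
  have hω0 : 0 ≤ ω := mul_nonneg K.2 (div_nonneg (sub_nonneg.2 hab.le) (by positivity))
  have hwindow := meshWindow_subset_Icc hab hk
  have hosc : ∀ x ∈ meshWindow a b n k, |φ x - φ t| ≤ ω := fun x hx =>
    (hK.dist_le_mul x (hwindow hx) t (meshNode_mem_Icc hab (by lia))).trans <|
      mul_le_mul_of_nonneg_left (abs_sub_meshNode_le hx) K.2
  have hbdd : ∃ C, ∀ x ∈ I, |φ x - φ t| ≤ C :=
    ⟨C + |φ t|, fun x hx => (abs_sub _ _).trans (add_le_add_left (hC x hx) _)⟩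
  have hT_small : ‖cfc (fun x => φ x - φ t) T w‖ ≤ ω * ‖w‖ :=
    hw.norm_cfc_apply_le hω0 (hφT.sub continuousOn_const) hosc
  have hη' : ω * ‖w‖ < η - ω * ‖w‖ := by
    rw [hω]
    linarith
  have hH_small : ∀ᶠ i in l, ‖cfc (fun x => φ x - φ t) (H i) w‖ < η - ω * ‖w‖ :=
    hH.eventually_norm_cfc_apply_lt (strictMono_meshNode hab (by lia)) (hwindow.trans habI) hw
      (hφ.sub continuousOn_const) hbdd hosc hη'
  filter_upwards [hH_small] with i hi
  have hcancel : (cfc φ (H i) - cfc φ T) w =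
      cfc (fun x => φ x - φ t) (H i) w - cfc (fun x => φ x - φ t) T w := by
    rw [cfc_sub_const_apply (hH.isSelfAdjoint i) (hφ.mono (hH.spectrum_subset i)),
      cfc_sub_const_apply hH.isSelfAdjoint_limit hφT, sub_sub_sub_cancel_right, sub_apply]
  rw [hcancel]
  linarith [norm_sub_le (cfc (fun x => φ x - φ t) (H i) w) (cfc (fun x => φ x - φ t) T w)]

lemma tendsto_cfc_apply_of_spectrum_subset_Icc (hH : StrictConvexTest l I f H T) (hab : a < b)
    (habI : Set.Icc a b ⊆ I) (hTab : spectrum ℝ T ⊆ Set.Icc a b) {φ : ℝ → ℝ}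
    (hφ : ContinuousOn φ I) (hφb : ∃ C, ∀ x ∈ I, |φ x| ≤ C) (u : 𝓗) :
    Tendsto (fun i => cfc φ (H i) u) l (𝓝 (cfc φ T u)) := by
  have hu := isSpectrallySupportedOn_of_spectrum_subset hTab u
  rw [Metric.tendsto_nhds]
  intro ε hε
  obtain ⟨r, hr, hrε⟩ := exists_pos_mul_lt (show 0 < ε / 3 by positivity) ‖u‖
  rw [mul_comm] at hrε
  obtain ⟨q, K, hq, ⟨C', hC'⟩, hqK, hφq⟩ := exists_lipschitzOnWith_near (hφ.mono habI) hr
  have hbdd : ∃ C, ∀ x ∈ I, |φ x - q x| ≤ C := by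
    obtain ⟨C, hC⟩ := hφb
    exact ⟨C + C', fun x hx => (abs_sub _ _).trans (add_le_add (hC x hx) (hC' x))⟩
  have herror_T : ‖cfc (fun x => φ x - q x) T u‖ ≤ r * ‖u‖ :=
    hu.norm_cfc_apply_le hr.le ((hφ.mono hH.spectrum_limit_subset).sub hq.continuousOn) hφq
  have hlipschitz := hH.tendsto_cfc_apply_of_lipschitzOnWith hab habI hu hq.continuousOn
    ⟨C', fun x _ => hC' x⟩ hqK
  have herror_H : ∀ᶠ i in l, ‖cfc (fun x => φ x - q x) (H i) u‖ < ε / 3 :=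
    hH.eventually_norm_cfc_apply_lt hab habI hu (hφ.sub hq.continuousOn) hbdd hφq hrε
  filter_upwards [Metric.tendsto_nhds.1 hlipschitz (ε / 3) (by positivity), herror_H]
    with i hi_q hi_error
  have hsplit : ∀ S : 𝓗 →L[ℂ] 𝓗, spectrum ℝ S ⊆ I →
      cfc (fun x => φ x - q x) S u = cfc φ S u - cfc q S u := fun S hS => by
    rw [cfc_sub φ q S (hφ.mono hS) hq.continuousOn, sub_apply]
  rw [hsplit _ (hH.spectrum_subset i)] at hi_error
  rw [hsplit _ hH.spectrum_limit_subset, ← dist_eq_norm, dist_comm] at herror_T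
  rw [← dist_eq_norm] at hi_error
  linarith [dist_triangle4 (cfc φ (H i) u) (cfc q (H i) u) (cfc q T u) (cfc φ T u)]

end StrictConvexTest

end StrongConvergence

lemma exists_cfc_eq_algebraMap_of_subsingleton {𝓗 : Type*} [NormedAddCommGroup 𝓗]
    [InnerProductSpace ℂ 𝓗] [CompleteSpace 𝓗] {I : Set ℝ} (hI : I.Subsingleton) (φ : ℝ → ℝ) :
    ∃ r : ℝ, ∀ S : 𝓗 →L[ℂ] 𝓗, IsSelfAdjoint S → spectrum ℝ S ⊆ I →
      cfc φ S = algebraMap ℝ (𝓗 →L[ℂ] 𝓗) r := by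
  obtain ⟨r, hr⟩ : ∃ r, ∀ x ∈ I, φ x = r := by
    rcases hI.eq_empty_or_singleton with rfl | ⟨x, rfl⟩
    exacts [⟨0, by simp⟩, ⟨φ x, by simp⟩]
  exact ⟨r, fun S hS hSI => by rw [cfc_congr fun x hx => hr x (hSI hx), cfc_const r S]⟩

/-- **Theorem 2.1.** Let `f` be a strictly convex continuous function on an interval `I`
and let `(Hᵢ)` be a net of self-adjoint bounded operators on a complex Hilbert space with
`σ(Hᵢ) ⊆ I`.  If `(Hᵢ)` converges weakly to a self-adjoint bounded operator `H` with
`σ(H) ⊆ I` and `(f(Hᵢ))` converges weakly to `f(H)`, then `(φ(Hᵢ))` converges strongly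
to `φ(H)` for every bounded continuous function `φ` on `I`. -/
theorem stmt_3 {𝓗 : Type*} [NormedAddCommGroup 𝓗] [InnerProductSpace ℂ 𝓗]
    [CompleteSpace 𝓗]
    {ι : Type*} (l : Filter ι) [l.NeBot]
    (I : Set ℝ) (hI : I.OrdConnected)
    (f : ℝ → ℝ) (hf : StrictConvexOn ℝ I f) (hfc : ContinuousOn f I)
    (H : ι → 𝓗 →L[ℂ] 𝓗) (hsa : ∀ i, IsSelfAdjoint (H i))
    (hspec : ∀ i, spectrum ℝ (H i) ⊆ I)
    (T : 𝓗 →L[ℂ] 𝓗) (hTsa : IsSelfAdjoint T) (hTspec : spectrum ℝ T ⊆ I)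
    (hWOT : ∀ v w : 𝓗, Tendsto (fun i => ⟪(H i) v, w⟫_ℂ) l (𝓝 ⟪T v, w⟫_ℂ))
    (hfWOT : ∀ v w : 𝓗,
      Tendsto (fun i => ⟪(cfc f (H i)) v, w⟫_ℂ) l (𝓝 ⟪(cfc f T) v, w⟫_ℂ))
    (φ : ℝ → ℝ) (hφc : ContinuousOn φ I) (hφb : ∃ C, ∀ x ∈ I, |φ x| ≤ C) :
    ∀ v : 𝓗, Tendsto (fun i => (cfc φ (H i)) v) l (𝓝 ((cfc φ T) v)) := by
  intro v
  rcases I.subsingleton_or_nontrivial with hsub | hnt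
  · obtain ⟨r, hr⟩ := exists_cfc_eq_algebraMap_of_subsingleton (𝓗 := 𝓗) hsub φ
    simp only [hr T hTsa hTspec, fun i => hr (H i) (hsa i) (hspec i)]
    exact tendsto_const_nhds
  · have hH : StrictConvexTest l I f H T :=
      ⟨hf, hfc, hsa, hspec, hTsa, hTspec,
        fun u => (Complex.continuous_re.tendsto _).comp (hWOT u u),
        fun u => (Complex.continuous_re.tendsto _).comp (hfWOT u u)⟩
    obtain ⟨a, b, hab, hTab, habI⟩ := exists_Icc_subset_of_isCompact hI hnt
      (spectrum.isCompact T) hTspec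
    exact hH.tendsto_cfc_apply_of_spectrum_subset_Icc hab habI hTab hφc hφb v
end

section
/- Let I ⊆ ℝ be an interval, let f : I → ℝ be a strictly convex continuous function, let 𝓗 be a complex Hilbert space, and let (Hᵢ)_{i∈ι} be a net of self-adjoint bounded operators on 𝓗 with σ(Hᵢ) ⊆ I for all i, which is bounded in operator norm. If (Hᵢ) converges in the weak operator topology to a self-adjoint bounded operator H with σ(H) ⊆ I, and (f(Hᵢ)) converges in the weak operator topology to f(H), then (Hᵢ) converges in the strong operator topology to H. -/
set_option synthInstance.maxHeartbeats 400000
set_option maxHeartbeats 800000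

open scoped InnerProductSpace
open Filter Topology

/-!
For `u < w` in `I`, the function `f` lies below its secant line through `u` and `w` on `[u, w]`,
nowhere more than the second difference `D` of `f` over `[u, w]` below it, and at least some
`κ > 0` above it at a fixed distance from `[u, w]`. Let `z` be a vector whose spectral support
for `T` is `[u, w]`, and let `g` vanish near `[u, w]` and satisfy `|g| ≤ M`. Then
`g² ≤ (M² / κ) (f - secant line + D)`, and the quadratic form at `z` of the right-hand side
converges along the net to a limit which is at most `(M² / κ) D ‖z‖²`; hence
`limsup ‖g(Hᵢ) z‖² ≤ (M² / κ) D ‖z‖²`.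

Cutting the spectral support into many short intervals makes the sum of the second differences
telescope to something that tends to `0`, and so `g(Hᵢ) z → 0` whenever `g` vanishes near the
spectral support of `z`. On the part of the space where `T` is within `δ` of a number, `Hᵢ` is
therefore asymptotically within `3 δ` of `T`. With `N` pieces of length `δ ~ 1 / N`, adding up the
errors by Cauchy-Schwarz gives `limsup ‖(Hᵢ - T) v‖ = O(δ √N) ‖v‖`, which tends to `0`.
-/

section Convexity

variable {s : Set ℝ} {f : ℝ → ℝ} {u w x : ℝ}

/-- The affine function that agrees with `f` at `u` and `w`. -/
noncomputable def secantLine (f : ℝ → ℝ) (u w x : ℝ) : ℝ := f u + slope f u w * (x - u)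

@[simp]
lemma secantLine_left (f : ℝ → ℝ) (u w : ℝ) : secantLine f u w u = f u := by
  simp [secantLine]

@[simp]
lemma secantLine_right (f : ℝ → ℝ) (u w : ℝ) : secantLine f u w w = f w := by
  have h : (w - u) * slope f u w = f w - f u := sub_smul_slope f u w
  rw [secantLine, mul_comm, h, add_sub_cancel]

@[fun_prop]
lemma continuous_secantLine (f : ℝ → ℝ) (u w : ℝ) : Continuous (secantLine f u w) := by
  unfold secantLine
  fun_prop

lemma convexOn_sub_secantLine (hf : ConvexOn ℝ s f) (u w : ℝ) :
    ConvexOn ℝ s (fun x => f x - secantLine f u w x) := by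
  refine hf.sub ⟨hf.1, fun x _ y _ a b _ _ hab => le_of_eq ?_⟩
  obtain rfl : b = 1 - a := by linarith
  simp only [secantLine, smul_eq_mul]
  ring

lemma le_secantLine_of_mem_Icc (hf : ConvexOn ℝ s f) (hu : u ∈ s) (hw : w ∈ s)
    (hx : x ∈ Set.Icc u w) : f x ≤ secantLine f u w x := by
  simpa using (convexOn_sub_secantLine hf u w).le_max_of_mem_Icc hu hw hx

lemma secantLine_le_of_notMem_Ioo (hf : ConvexOn ℝ s f) (hu : u ∈ s) (hw : w ∈ s) (huw : u < w)
    (hx : x ∈ s) (hxuw : x ∉ Set.Ioo u w) : secantLine f u w x ≤ f x := by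
  have hconv := convexOn_sub_secantLine hf u w
  rw [← sub_nonneg]
  rcases le_or_gt w x with hwx | hxw
  · have hux : u < x := huw.trans_le hwx
    have := hconv.secant_mono hu hw hx huw.ne' hux.ne' hwx
    rwa [secantLine_left, secantLine_right, sub_self, sub_self, sub_zero, sub_zero, zero_div,
      le_div_iff₀ (sub_pos.2 hux), zero_mul] at this
  · have hxu : x ≤ u := not_lt.1 fun hux => hxuw ⟨hux, hxw⟩
    have := hconv.secant_mono hw hx hu hxw.ne huw.ne hxu
    rwa [secantLine_left, secantLine_right, sub_self, sub_self, sub_zero, sub_zero, zero_div,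
      div_le_iff_of_neg (sub_neg.2 hxw), zero_mul] at this

/-- The second difference of `f` over the interval with endpoints `u` and `w`. It bounds the
distance from a convex function on `[u, w]` to its secant line. -/
noncomputable def midpointDefect (f : ℝ → ℝ) (u w : ℝ) : ℝ := f u + f w - 2 * f ((u + w) / 2)

lemma midpointDefect_nonneg (hf : ConvexOn ℝ s f) (hu : u ∈ s) (hw : w ∈ s) :
    0 ≤ midpointDefect f u w := by
  have h := hf.2 hu hw one_half_pos.le one_half_pos.le (add_halves 1)
  simp only [smul_eq_mul, one_div_mul_eq_div, ← add_div] at h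
  unfold midpointDefect
  linarith

lemma midpointDefect_pos (hf : StrictConvexOn ℝ s f) (hu : u ∈ s) (hw : w ∈ s) (huw : u ≠ w) :
    0 < midpointDefect f u w := by
  have h := hf.2 hu hw huw one_half_pos one_half_pos (add_halves 1)
  simp only [smul_eq_mul, one_div_mul_eq_div, ← add_div] at h
  unfold midpointDefect
  linarith

lemma secantLine_sub_midpointDefect_le (hf : ConvexOn ℝ s f) (hu : u ∈ s) (hw : w ∈ s)
    (huw : u < w) (hx : x ∈ s) : secantLine f u w x - midpointDefect f u w ≤ f x := by
  by_cases hxuw : x ∈ Set.Ioo u w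
  · have hy : u + w - x ∈ Set.Icc u w := ⟨by linarith [hxuw.2], by linarith [hxuw.1]⟩
    have hmid := midpointDefect_nonneg hf hx (hf.1.ordConnected.out hu hw hy)
    have hline : secantLine f u w x + secantLine f u w (u + w - x) = f u + f w := by
      rw [← secantLine_right f u w]
      simp only [secantLine]
      ring
    have := le_secantLine_of_mem_Icc hf hu hw hy
    simp only [midpointDefect, add_sub_cancel] at hmid ⊢
    linarith
  · linarith [secantLine_le_of_notMem_Ioo hf hu hw huw hx hxuw, midpointDefect_nonneg hf hu hw]

lemma midpointDefect_sub_secantLine (f : ℝ → ℝ) (u w p r : ℝ) :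
    midpointDefect (fun x => f x - secantLine f u w x) p r = midpointDefect f p r := by
  simp only [midpointDefect, secantLine]
  ring

lemma midpointDefect_le_of_mem_segment {k : ℝ → ℝ} {z p r : ℝ} (hk : ConvexOn ℝ s k) (hz : z ∈ s)
    (hx : x ∈ s) (hkz : k z = 0) (hp : p ∈ segment ℝ z ((p + r) / 2)) (hr : r ∈ segment ℝ z x)
    (hmid : (p + r) / 2 ∈ s) (hkmid : 0 ≤ k ((p + r) / 2)) (hpos : 0 < midpointDefect k p r) :
    midpointDefect k p r ≤ k x := by
  have hkp := hk.le_max_of_mem_segment hz hmid hp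
  rw [hkz, max_eq_right hkmid] at hkp
  have hkr : midpointDefect k p r ≤ k r := by
    unfold midpointDefect
    linarith
  rcases le_max_iff.1 (hk.le_max_of_mem_segment hz hx hr) with h | h <;> linarith

lemma exists_pos_forall_le_sub_secantLine_of_le (hf : StrictConvexOn ℝ s f) {p r : ℝ}
    (hpr : p < r) : ∃ κ > 0, ∀ u ∈ s, ∀ w ∈ s, ∀ x ∈ s, u < w → w ≤ p → r ≤ x →
      κ ≤ f x - secantLine f u w x := by
  by_cases hmem : p ∈ s ∧ r ∈ s
  · have hpos := midpointDefect_pos hf hmem.1 hmem.2 hpr.ne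
    refine ⟨_, hpos, fun u hu w hw x hx huw hwp hrx => ?_⟩
    have hmid : (p + r) / 2 ∈ s :=
      hf.1.ordConnected.out hmem.1 hmem.2 ⟨by linarith, by linarith⟩
    have hkmid := secantLine_le_of_notMem_Ioo hf.convexOn hu hw huw hmid
      fun h => absurd h.2 (by linarith)
    rw [← midpointDefect_sub_secantLine f u w] at hpos ⊢
    exact midpointDefect_le_of_mem_segment (convexOn_sub_secantLine hf.convexOn u w) hw hx
      (by simp) (Icc_subset_segment ⟨hwp, by linarith⟩)
      (Icc_subset_segment ⟨hwp.trans hpr.le, hrx⟩) hmid (sub_nonneg.2 hkmid) hpos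
  · refine ⟨1, one_pos, fun u _ w hw x hx _ hwp hrx => absurd ?_ hmem⟩
    exact ⟨hf.1.ordConnected.out hw hx ⟨hwp, hpr.le.trans hrx⟩,
      hf.1.ordConnected.out hw hx ⟨hwp.trans hpr.le, hrx⟩⟩

lemma secantLine_comp_neg (f : ℝ → ℝ) (u w x : ℝ) :
    secantLine (fun y => f (-y)) (-w) (-u) (-x) = secantLine f u w x := by
  rcases eq_or_ne u w with rfl | huw
  · simp [secantLine]
  · have := sub_ne_zero.2 huw
    have := sub_ne_zero.2 huw.symm
    simp only [secantLine, slope_def_field, neg_neg]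
    rw [show -u - -w = w - u by ring]
    field_simp
    ring

lemma strictConvexOn_comp_neg (hf : StrictConvexOn ℝ s f) :
    StrictConvexOn ℝ (-s) (fun x => f (-x)) := by
  refine ⟨hf.1.neg, fun x hx y hy hxy a b ha hb hab => ?_⟩
  simpa [add_comm] using hf.2 hx hy (neg_injective.ne hxy) ha hb hab

lemma exists_pos_forall_le_sub_secantLine (hf : StrictConvexOn ℝ s f) {p q p' q' : ℝ}
    (hp : p' < p) (hq : q < q') : ∃ κ > 0, ∀ u ∈ s, ∀ w ∈ s, ∀ x ∈ s, u < w → p ≤ u → w ≤ q →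
      x ∉ Set.Ioo p' q' → κ ≤ f x - secantLine f u w x := by
  obtain ⟨κ, hκ, hright⟩ := exists_pos_forall_le_sub_secantLine_of_le hf hq
  obtain ⟨κ', hκ', hleft⟩ := exists_pos_forall_le_sub_secantLine_of_le
    (strictConvexOn_comp_neg hf) (neg_lt_neg hp)
  refine ⟨min κ κ', lt_min hκ hκ', fun u hu w hw x hx huw hpu hwq hxpq => ?_⟩
  rcases le_or_gt q' x with h | h
  · exact min_le_of_left_le (hright u hu w hw x hx huw hwq h)
  · have hxp : x ≤ p' := not_lt.1 fun h' => hxpq ⟨h', h⟩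
    have := hleft (-w) (by simpa) (-u) (by simpa) (-x) (by simpa) (neg_lt_neg huw)
      (neg_le_neg hpu) (neg_le_neg hxp)
    rw [secantLine_comp_neg, neg_neg] at this
    exact min_le_of_right_le this

end Convexity

section Partition

variable {α β : ℝ} {N j : ℕ}

/-- The nodes `α = node α β N 0 < ⋯ < node α β N (N + 1) = β` that cut `[α, β]` into `N + 1`
intervals of equal length. -/
noncomputable def node (α β : ℝ) (N j : ℕ) : ℝ := α + j * ((β - α) / (N + 1))

lemma node_lt_node {i : ℕ} (hαβ : α < β) (hij : i < j) : node α β N i < node α β N j := by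
  have := sub_pos.2 hαβ
  unfold node
  gcongr

lemma node_add_two_sub_node (α β : ℝ) (N j : ℕ) :
    node α β N (j + 2) - node α β N j = 2 * ((β - α) / (N + 1)) := by
  simp only [node, Nat.cast_add, Nat.cast_ofNat]
  ring

lemma node_mem_Icc (hαβ : α ≤ β) (hj : j ≤ N + 1) : node α β N j ∈ Set.Icc α β := by
  have hαβ' := sub_nonneg.2 hαβ
  have hj' : (j : ℝ) / (N + 1) ≤ 1 := div_le_one_of_le₀ (by exact_mod_cast hj) (by positivity)
  have h : j * ((β - α) / (N + 1)) = j / (N + 1) * (β - α) := by ring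
  refine ⟨le_add_of_nonneg_right (by positivity), ?_⟩
  rw [node, h]
  linarith [mul_le_of_le_one_left hαβ' hj']

lemma sum_midpointDefect_node (f : ℝ → ℝ) (α β : ℝ) (N : ℕ) :
    ∑ j ∈ Finset.range N, midpointDefect f (node α β N j) (node α β N (j + 2)) =
      (f β - f (node α β N N)) - (f (node α β N 1) - f α) := by
  have hmid (j : ℕ) : (node α β N j + node α β N (j + 2)) / 2 = node α β N (j + 1) := by
    simp only [node]
    push_cast
    ring
  have hβ : node α β N (N + 1) = β := by
    simp only [node]
    push_cast
    field_simp
    ring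
  have hα : node α β N 0 = α := by simp [node]
  have := Finset.sum_range_sub (fun j => f (node α β N (j + 1)) - f (node α β N j)) N
  rw [hβ, zero_add, hα] at this
  rw [← this]
  refine Finset.sum_congr rfl fun j _ => ?_
  rw [midpointDefect, hmid]
  ring

lemma tendsto_sum_midpointDefect_node {f : ℝ → ℝ} (hαβ : α ≤ β)
    (hf : ContinuousOn f (Set.Icc α β)) :
    Tendsto (fun N => ∑ j ∈ Finset.range N,
      midpointDefect f (node α β N j) (node α β N (j + 2))) atTop (𝓝 0) := by
  have hmesh : Tendsto (fun N : ℕ => (β - α) / (N + 1)) atTop (𝓝 0) := by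
    simpa [div_eq_mul_inv] using tendsto_one_div_add_atTop_nhds_zero_nat.const_mul (β - α)
  have hlim {z : ℝ} (hz : z ∈ Set.Icc α β) {g : ℕ → ℝ} (hg : Tendsto g atTop (𝓝 z))
      (hmem : ∀ N, g N ∈ Set.Icc α β) : Tendsto (fun N => f (g N)) atTop (𝓝 (f z)) :=
    (hf z hz).tendsto.comp (tendsto_nhdsWithin_iff.2 ⟨hg, .of_forall hmem⟩)
  have hlast (N : ℕ) : node α β N N = β - (β - α) / (N + 1) := by
    simp only [node]
    field_simp
    ring
  have hβ := hlim (Set.right_mem_Icc.2 hαβ) (g := fun N => node α β N N)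
    (by simpa [hlast] using hmesh.const_sub β) fun N => node_mem_Icc hαβ (by lia)
  have hα := hlim (Set.left_mem_Icc.2 hαβ) (g := fun N => node α β N 1)
    (by simpa [node] using hmesh.const_add α) fun N => node_mem_Icc hαβ (by lia)
  simpa [sum_midpointDefect_node] using (hβ.const_sub (f β)).sub (hα.sub_const (f α))

lemma exists_partition_nat (hN : 1 ≤ N) :
    ∃ ρ : ℕ → ℝ → ℝ, (∀ j, Continuous (ρ j)) ∧ (∀ t, ∑ j ∈ Finset.range N, ρ j t = 1) ∧
      (∀ t, ∑ j ∈ Finset.range N, ρ j t ^ 2 ≤ 1) ∧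
      ∀ j : ℕ, ∀ t ∈ Set.Icc (0 : ℝ) (N + 1), t ∉ Set.Icc (j : ℝ) (j + 2) → ρ j t = 0 := by
  have hN' : (1 : ℝ) ≤ N := by exact_mod_cast hN
  -- The clamping gives the first and the last function of the partition the value `1` up to the
  -- endpoints, so that no cell sticks out of `[0, N + 1]`.
  set clamp : ℝ → ℝ := fun t => max 1 (min N t) with hclamp
  set ramp : ℕ → ℝ → ℝ := fun j t => max 0 (min 1 (clamp t - j)) with hramp
  have ramp_zero {j : ℕ} {t : ℝ} (h : clamp t ≤ j) : ramp j t = 0 :=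
    max_eq_left (min_le_of_right_le (sub_nonpos.2 h))
  have ramp_one {j : ℕ} {t : ℝ} (h : j + 1 ≤ clamp t) : ramp j t = 1 := by
    simp only [hramp, min_eq_left (le_sub_iff_add_le'.2 h), max_eq_right zero_le_one]
  have hnonneg (j : ℕ) (t : ℝ) : 0 ≤ ramp j t - ramp (j + 1) t := by
    simp only [hramp, Nat.cast_add, Nat.cast_one, sub_nonneg]
    gcongr
    linarith
  have hsum (t : ℝ) : ∑ j ∈ Finset.range N, (ramp j t - ramp (j + 1) t) = 1 := by
    have h0 : ramp 0 t = 1 := ramp_one (by simp [hclamp])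
    have hN0 : ramp N t = 0 := ramp_zero (max_le hN' (min_le_left _ _))
    rw [Finset.sum_range_sub' (fun j => ramp j t), h0, hN0, sub_zero]
  refine ⟨fun j t => ramp j t - ramp (j + 1) t, fun j => by fun_prop, hsum, fun t => ?_,
    fun j t ht htj => sub_eq_zero.2 ?_⟩
  · simpa [hsum] using Finset.sum_sq_le_sq_sum_of_nonneg fun j (_ : j ∈ Finset.range N) =>
      hnonneg j t
  · rcases lt_or_ge t j with hlt | hge
    · have hj1 : (1 : ℝ) ≤ j := by exact_mod_cast (Nat.cast_pos.1 (ht.1.trans_lt hlt) : 0 < j)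
      have hle : clamp t ≤ j := max_le hj1 (min_le_of_right_le hlt.le)
      rw [ramp_zero hle, ramp_zero (hle.trans (by simp))]
    · have hgt : (j : ℝ) + 2 < t := not_le.1 fun h => htj ⟨hge, h⟩
      have hjN : (j : ℝ) + 2 ≤ N := by
        have : j + 1 < N := by exact_mod_cast (by linarith [ht.2] : (j : ℝ) + 1 < N)
        exact_mod_cast this
      have hle : (j : ℝ) + 2 ≤ clamp t := le_max_of_le_right (le_min hjN hgt.le)
      rw [ramp_one (by linarith), ramp_one (by push_cast; linarith)]

lemma exists_partition_node (hαβ : α < β) (hN : 1 ≤ N) :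
    ∃ ψ : ℕ → ℝ → ℝ, (∀ j, Continuous (ψ j)) ∧ (∀ x, ∑ j ∈ Finset.range N, ψ j x = 1) ∧
      (∀ x, ∑ j ∈ Finset.range N, ψ j x ^ 2 ≤ 1) ∧
      ∀ j : ℕ, ∀ x ∈ Set.Icc α β, x ∉ Set.Icc (node α β N j) (node α β N (j + 2)) →
        ψ j x = 0 := by
  obtain ⟨ρ, hcont, hsum, hsq, hsupp⟩ := exists_partition_nat hN
  set h := (β - α) / (N + 1) with hh
  have hpos : 0 < h := div_pos (sub_pos.2 hαβ) (by positivity)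
  have hmul : (N + 1) * h = β - α := mul_div_cancel₀ _ (by positivity)
  refine ⟨fun j x => ρ j ((x - α) / h), fun j => (hcont j).comp (by fun_prop), fun x => hsum _,
    fun x => hsq _, fun j x hx hxj => hsupp j _ ?_ fun hmem => hxj ?_⟩
  · rw [Set.mem_Icc, le_div_iff₀ hpos, div_le_iff₀ hpos, hmul]
    exact ⟨by linarith [hx.1], by linarith [hx.2]⟩
  · rw [Set.mem_Icc, le_div_iff₀ hpos, div_le_iff₀ hpos] at hmem
    simp only [node, ← hh, Set.mem_Icc, Nat.cast_add, Nat.cast_ofNat]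
    exact ⟨by linarith [hmem.1], by linarith [hmem.2]⟩

end Partition

lemma exists_lt_Icc_subset_of_isCompact {I K : Set ℝ} (hI : I.OrdConnected) (hne : I.Nontrivial)
    (hK : IsCompact K) (hKI : K ⊆ I) : ∃ α β, α < β ∧ Set.Icc α β ⊆ I ∧ K ⊆ Set.Icc α β := by
  obtain ⟨x, hx, y, hy, hxy⟩ := hne.exists_lt
  obtain ⟨α, hα⟩ := (hK.insert x).exists_isLeast (Set.insert_nonempty x K)
  obtain ⟨β, hβ⟩ := (hK.insert y).exists_isGreatest (Set.insert_nonempty y K)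
  refine ⟨α, β, ?_, hI.out (Set.insert_subset hx hKI hα.1) (Set.insert_subset hy hKI hβ.1),
    fun z hz => ⟨hα.2 (Set.mem_insert_of_mem x hz), hβ.2 (Set.mem_insert_of_mem y hz)⟩⟩
  exact (hα.2 (Set.mem_insert x K)).trans_lt (hxy.trans_le (hβ.2 (Set.mem_insert y K)))

section AsymptoticallyLE

variable {ι κ E : Type*} {l : Filter ι} {a b : ι → ℝ} {c d : ℝ}

/-- `AsymptoticallyLE l a c` says that the upper limit of `a` along `l` is at most `c`. Unlike
`limsup a l ≤ c`, it does not take a junk value when `a` is unbounded below. -/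
def AsymptoticallyLE (l : Filter ι) (a : ι → ℝ) (c : ℝ) : Prop :=
  ∀ ε > 0, ∀ᶠ i in l, a i ≤ c + ε

namespace AsymptoticallyLE

lemma of_tendsto (ha : Tendsto a l (𝓝 c)) : AsymptoticallyLE l a c :=
  fun _ hε => ha.eventually (ge_mem_nhds (lt_add_of_pos_right c hε))

lemma mono (ha : AsymptoticallyLE l a c) (hcd : c ≤ d) : AsymptoticallyLE l a d :=
  fun ε hε => (ha ε hε).mono fun _ hi => hi.trans (add_le_add_left hcd ε)

lemma of_le (hb : AsymptoticallyLE l b c) (hab : ∀ i, a i ≤ b i) : AsymptoticallyLE l a c :=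
  fun ε hε => (hb ε hε).mono fun i hi => (hab i).trans hi

lemma add (ha : AsymptoticallyLE l a c) (hb : AsymptoticallyLE l b d) :
    AsymptoticallyLE l (fun i => a i + b i) (c + d) := fun ε hε => by
  filter_upwards [ha (ε / 2) (half_pos hε), hb (ε / 2) (half_pos hε)] with i hai hbi
  linarith

lemma sum {s : Finset κ} {a : κ → ι → ℝ} {c : κ → ℝ}
    (h : ∀ j ∈ s, AsymptoticallyLE l (a j) (c j)) :
    AsymptoticallyLE l (fun i => ∑ j ∈ s, a j i) (∑ j ∈ s, c j) := by
  classical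
  induction s using Finset.induction_on with
  | empty => simpa using of_tendsto tendsto_const_nhds
  | insert j s hj ih =>
    simp only [Finset.sum_insert hj]
    exact (h j (s.mem_insert_self j)).add (ih fun k hk => h k (Finset.mem_insert_of_mem hk))

lemma tendsto_zero [SeminormedAddCommGroup E] {x : ι → E} {c : ℕ → ℝ}
    (h : ∀ᶠ n in atTop, AsymptoticallyLE l (fun i => ‖x i‖) (c n))
    (hc : Tendsto c atTop (𝓝 0)) : Tendsto x l (𝓝 0) := by
  rw [tendsto_zero_iff_norm_tendsto_zero, Metric.tendsto_nhds]
  intro ε hε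
  obtain ⟨n, hn, hcn⟩ := (h.and (hc.eventually (gt_mem_nhds (half_pos hε)))).exists
  filter_upwards [hn (ε / 2) (half_pos hε)] with i hi
  rw [dist_zero_right, norm_norm]
  linarith

end AsymptoticallyLE

end AsymptoticallyLE

section FunctionalCalculus

open ContinuousLinearMap

variable {𝓗 : Type*} [NormedAddCommGroup 𝓗] [InnerProductSpace ℂ 𝓗]

lemma reApplyInnerSelf_mono {A B : 𝓗 →L[ℂ] 𝓗} (h : A ≤ B) (v : 𝓗) :
    A.reApplyInnerSelf v ≤ B.reApplyInnerSelf v := by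
  have := (le_def A B).1 h |>.re_inner_nonneg_left v
  rwa [sub_apply, inner_sub_left, map_sub, sub_nonneg] at this

variable [CompleteSpace 𝓗] {A : 𝓗 →L[ℂ] 𝓗} {g k φ : ℝ → ℝ}

lemma inner_cfc_apply_left (g : ℝ → ℝ) (A : 𝓗 →L[ℂ] 𝓗) (v w : 𝓗) :
    ⟪cfc g A v, w⟫_ℂ = ⟪v, cfc g A w⟫_ℂ :=
  isSelfAdjoint_iff_isSymmetric.1 IsSelfAdjoint.cfc v w

lemma reApplyInnerSelf_cfc_apply (hk : ContinuousOn k (spectrum ℝ A))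
    (hφ : ContinuousOn φ (spectrum ℝ A)) (v : 𝓗) :
    (cfc k A).reApplyInnerSelf (cfc φ A v) =
      (cfc (fun x => φ x * (k x * φ x)) A).reApplyInnerSelf v := by
  rw [cfc_mul φ _ A hφ (hk.fun_mul hφ), cfc_mul k φ A hk hφ]
  simp only [reApplyInnerSelf_apply, mul_apply_eq_comp, inner_cfc_apply_left φ]

lemma norm_sq_cfc_apply (hg : ContinuousOn g (spectrum ℝ A)) (v : 𝓗) :
    ‖cfc g A v‖ ^ 2 = (cfc (fun x => g x * g x) A).reApplyInnerSelf v := by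
  rw [cfc_mul g g A hg hg, reApplyInnerSelf_apply, mul_apply_eq_comp, inner_cfc_apply_left,
    inner_self_eq_norm_sq]

lemma reApplyInnerSelf_cfc_affine (hA : IsSelfAdjoint A) (hk : ContinuousOn k (spectrum ℝ A))
    (a b c : ℝ) (v : 𝓗) :
    (cfc (fun x => a * k x + b * x + c) A).reApplyInnerSelf v =
      a * (cfc k A).reApplyInnerSelf v + b * A.reApplyInnerSelf v + c * ‖v‖ ^ 2 := by
  rw [cfc_add_const c _ A (by fun_prop), cfc_add A _ _ (by fun_prop) (by fun_prop),
    cfc_const_mul a k A hk, cfc_const_mul_id b A]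
  have hv : (⟪v, v⟫_ℂ).re = ‖v‖ ^ 2 := inner_self_eq_norm_sq (𝕜 := ℂ) v
  simp [reApplyInnerSelf_apply, Algebra.algebraMap_eq_smul_one, inner_add_left,
    inner_smul_left_eq_smul, -inner_self_eq_norm_sq_to_K, hv]

lemma abs_le_norm_of_mem_spectrum {x : ℝ} (hx : x ∈ spectrum ℝ A) : |x| ≤ ‖A‖ :=
  (spectrum.norm_le_norm_mul_of_mem hx).trans
    (mul_le_of_le_one_right (norm_nonneg A) norm_id_le)

lemma cfc_sub_const (hA : IsSelfAdjoint A) (p : ℝ) :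
    cfc (fun x => x - p) A = A - algebraMap ℝ _ p := by
  rw [cfc_sub (fun x => x) (fun _ => p) A, cfc_id' ℝ A, cfc_const p A]

lemma sub_eq_cfc_add_cfc_sub_cfc {T : 𝓗 →L[ℂ] 𝓗} (hA : IsSelfAdjoint A) (hT : IsSelfAdjoint T)
    (hg : ContinuousOn g (spectrum ℝ A)) (p : ℝ) :
    A - T = cfc (fun x => x - p - g x) A + cfc g A - cfc (fun x => x - p) T := by
  rw [cfc_sub (fun x => x - p) g A, sub_add_cancel, cfc_sub_const hA, cfc_sub_const hT,
    sub_sub_sub_cancel_right]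

lemma norm_sq_cfc_apply_le (hg : ContinuousOn g (spectrum ℝ A))
    (hk : ContinuousOn k (spectrum ℝ A)) (hgk : ∀ x ∈ spectrum ℝ A, g x ^ 2 ≤ k x) (v : 𝓗) :
    ‖cfc g A v‖ ^ 2 ≤ (cfc k A).reApplyInnerSelf v := by
  rw [norm_sq_cfc_apply hg]
  refine reApplyInnerSelf_mono (cfc_mono (fun x hx => ?_) (hg.fun_mul hg) hk) v
  simpa only [pow_two] using hgk x hx

lemma reApplyInnerSelf_cfc_apply_le {c : ℝ} (hk : ContinuousOn k (spectrum ℝ A))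
    (hφ : ContinuousOn φ (spectrum ℝ A)) (hkc : ∀ x ∈ spectrum ℝ A, φ x ≠ 0 → k x ≤ c) (v : 𝓗) :
    (cfc k A).reApplyInnerSelf (cfc φ A v) ≤ c * ‖cfc φ A v‖ ^ 2 := by
  have hle : cfc (fun x => φ x * (k x * φ x)) A ≤ cfc (fun x => c * (φ x * φ x)) A := by
    refine cfc_mono (fun x hx => ?_) (hφ.fun_mul (hk.fun_mul hφ))
      (continuousOn_const.fun_mul (hφ.fun_mul hφ))
    rcases eq_or_ne (φ x) 0 with h | h
    · simp [h]
    · nlinarith [hkc x hx h, mul_self_nonneg (φ x)]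
  rw [reApplyInnerSelf_cfc_apply hk hφ, norm_sq_cfc_apply hφ]
  refine (reApplyInnerSelf_mono hle v).trans_eq ?_
  rw [cfc_const_mul c _ A (hφ.fun_mul hφ), reApplyInnerSelf_apply, smul_apply,
    inner_smul_left_eq_smul, reApplyInnerSelf_apply, RCLike.smul_re]

lemma norm_cfc_apply_cfc_apply_le {c : ℝ} (hg : ContinuousOn g (spectrum ℝ A))
    (hφ : ContinuousOn φ (spectrum ℝ A)) (hc : 0 ≤ c)
    (hgc : ∀ x ∈ spectrum ℝ A, φ x ≠ 0 → |g x| ≤ c) (v : 𝓗) :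
    ‖cfc g A (cfc φ A v)‖ ≤ c * ‖cfc φ A v‖ := by
  refine le_of_sq_le_sq ?_ (by positivity)
  calc ‖cfc g A (cfc φ A v)‖ ^ 2 ≤ (cfc (fun x => g x ^ 2) A).reApplyInnerSelf (cfc φ A v) :=
        norm_sq_cfc_apply_le hg (hg.pow 2) (fun _ _ => le_rfl) _
    _ ≤ c ^ 2 * ‖cfc φ A v‖ ^ 2 := reApplyInnerSelf_cfc_apply_le (hg.pow 2) hφ
        (fun x hx hφx => sq_le_sq.2 ((hgc x hx hφx).trans (le_abs_self c))) v
    _ = (c * ‖cfc φ A v‖) ^ 2 := (mul_pow ..).symm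

lemma sum_norm_sq_cfc_apply_le {κ : Type*} {s : Finset κ} {ψ : κ → ℝ → ℝ}
    (hψ : ∀ j ∈ s, ContinuousOn (ψ j) (spectrum ℝ A))
    (hsq : ∀ x ∈ spectrum ℝ A, ∑ j ∈ s, ψ j x ^ 2 ≤ 1) (v : 𝓗) :
    ∑ j ∈ s, ‖cfc (ψ j) A v‖ ^ 2 ≤ ‖v‖ ^ 2 := by
  have hψ2 (j) (hj : j ∈ s) : ContinuousOn (fun x => ψ j x * ψ j x) (spectrum ℝ A) :=
    (hψ j hj).fun_mul (hψ j hj)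
  have hle : ∑ j ∈ s, cfc (fun x => ψ j x * ψ j x) A ≤ 1 := by
    rw [← cfc_sum _ A s hψ2]
    refine cfc_le_one _ A fun x hx => ?_
    simpa only [Finset.sum_apply, ← pow_two] using hsq x hx
  calc ∑ j ∈ s, ‖cfc (ψ j) A v‖ ^ 2
      = (∑ j ∈ s, cfc (fun x => ψ j x * ψ j x) A).reApplyInnerSelf v := by
        rw [reApplyInnerSelf_apply, sum_apply, sum_inner, map_sum]
        exact Finset.sum_congr rfl fun j hj => norm_sq_cfc_apply (hψ j hj) v
    _ ≤ (1 : 𝓗 →L[ℂ] 𝓗).reApplyInnerSelf v := reApplyInnerSelf_mono hle v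
    _ = ‖v‖ ^ 2 := by rw [reApplyInnerSelf_apply, one_apply_eq_self, inner_self_eq_norm_sq]

lemma asymptoticallyLE_norm_apply_of_partition {ι κ : Type*} {l : Filter ι}
    {B : ι → 𝓗 →L[ℂ] 𝓗} (hA : IsSelfAdjoint A) {s : Finset κ} {ψ : κ → ℝ → ℝ} {c : κ → ℝ}
    (hψ : ∀ j ∈ s, ContinuousOn (ψ j) (spectrum ℝ A))
    (hsum : ∀ x ∈ spectrum ℝ A, ∑ j ∈ s, ψ j x = 1)
    (hsq : ∀ x ∈ spectrum ℝ A, ∑ j ∈ s, ψ j x ^ 2 ≤ 1) (v : 𝓗)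
    (hB : ∀ j ∈ s, AsymptoticallyLE l (fun i => ‖B i (cfc (ψ j) A v)‖) (c j * ‖cfc (ψ j) A v‖)) :
    AsymptoticallyLE l (fun i => ‖B i v‖) (√(∑ j ∈ s, c j ^ 2) * ‖v‖) := by
  have hv : ∑ j ∈ s, cfc (ψ j) A v = v := by
    rw [← sum_apply, ← cfc_sum _ A s hψ, cfc_congr (g := fun _ => 1) fun x hx => ?_,
      cfc_const_one ℝ A, one_apply_eq_self]
    rw [Finset.sum_apply, hsum x hx]
  refine ((AsymptoticallyLE.sum hB).of_le fun i => ?_).mono ?_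
  · conv_lhs => rw [← hv, map_sum]
    exact norm_sum_le _ _
  · calc ∑ j ∈ s, c j * ‖cfc (ψ j) A v‖
        ≤ √(∑ j ∈ s, c j ^ 2) * √(∑ j ∈ s, ‖cfc (ψ j) A v‖ ^ 2) :=
          Real.sum_mul_le_sqrt_mul_sqrt ..
      _ ≤ √(∑ j ∈ s, c j ^ 2) * ‖v‖ := by
          gcongr
          exact Real.sqrt_le_left (norm_nonneg v) |>.2 (sum_norm_sq_cfc_apply_le hψ hsq v)

lemma eq_of_spectrum_subset_subsingleton {A B : 𝓗 →L[ℂ] 𝓗} (hA : IsSelfAdjoint A)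
    (hB : IsSelfAdjoint B) {I : Set ℝ} (hI : I.Subsingleton) (hAI : spectrum ℝ A ⊆ I)
    (hBI : spectrum ℝ B ⊆ I) : A = B := by
  obtain ⟨r, hr⟩ : ∃ r, I ⊆ {r} := by
    rcases hI.eq_empty_or_singleton with rfl | ⟨r, rfl⟩
    exacts [⟨0, Set.empty_subset _⟩, ⟨r, subset_rfl⟩]
  rw [CFC.eq_algebraMap_of_spectrum_subset_singleton A r (hAI.trans hr),
    CFC.eq_algebraMap_of_spectrum_subset_singleton B r (hBI.trans hr)]

end FunctionalCalculus

section StrongConvergence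

open ContinuousLinearMap

variable {𝓗 : Type*} [NormedAddCommGroup 𝓗] [InnerProductSpace ℂ 𝓗]
  {ι : Type*} {l : Filter ι} {H : ι → 𝓗 →L[ℂ] 𝓗} {T : 𝓗 →L[ℂ] 𝓗}

/-- Pointwise convergence along `l` of the quadratic forms `v ↦ re ⟪H i v, v⟫` to that of `T`:
the part of convergence in the weak operator topology that the argument uses. -/
def TendstoForm (H : ι → 𝓗 →L[ℂ] 𝓗) (l : Filter ι) (T : 𝓗 →L[ℂ] 𝓗) : Prop :=
  ∀ v, Tendsto (fun i => (H i).reApplyInnerSelf v) l (𝓝 (T.reApplyInnerSelf v))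

lemma tendstoForm_of_tendsto_inner
    (h : ∀ v w : 𝓗, Tendsto (fun i => ⟪H i v, w⟫_ℂ) l (𝓝 ⟪T v, w⟫_ℂ)) : TendstoForm H l T :=
  fun v => (RCLike.continuous_re.tendsto _).comp (h v v)

variable [CompleteSpace 𝓗] {I : Set ℝ} {f g φ : ℝ → ℝ}

lemma TendstoForm.cfc_affine (hsa : ∀ i, IsSelfAdjoint (H i)) (hT : IsSelfAdjoint T)
    (hfH : ∀ i, ContinuousOn f (spectrum ℝ (H i))) (hfT : ContinuousOn f (spectrum ℝ T))
    (hH : TendstoForm H l T) (hcfc : TendstoForm (fun i => cfc f (H i)) l (cfc f T)) (a b c : ℝ) :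
    TendstoForm (fun i => cfc (fun x => a * f x + b * x + c) (H i)) l
      (cfc (fun x => a * f x + b * x + c) T) := fun v => by
  simp only [reApplyInnerSelf_cfc_affine (hsa _) (hfH _), reApplyInnerSelf_cfc_affine hT hfT]
  exact (((hcfc v).const_mul a).add ((hH v).const_mul b)).add_const _

lemma asymptoticallyLE_norm_cfc_apply {r : ℝ → ℝ} {c : ℝ}
    (hr : TendstoForm (fun i => cfc r (H i)) l (cfc r T))
    (hrH : ∀ i, ContinuousOn r (spectrum ℝ (H i))) (hrT : ContinuousOn r (spectrum ℝ T))
    (hg : ∀ i, ContinuousOn g (spectrum ℝ (H i))) (hφ : ContinuousOn φ (spectrum ℝ T))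
    (hgr : ∀ i, ∀ x ∈ spectrum ℝ (H i), g x ^ 2 ≤ r x)
    (hrc : ∀ x ∈ spectrum ℝ T, φ x ≠ 0 → r x ≤ c) (v : 𝓗) :
    AsymptoticallyLE l (fun i => ‖cfc g (H i) (cfc φ T v)‖) (√c * ‖cfc φ T v‖) := by
  refine ((AsymptoticallyLE.of_tendsto (hr (cfc φ T v)).sqrt).of_le fun i => ?_).mono ?_
  · exact Real.le_sqrt_of_sq_le (norm_sq_cfc_apply_le (hg i) (hrH i) (hgr i) _)
  · rw [← Real.sqrt_sq (norm_nonneg (cfc φ T v)), ← Real.sqrt_mul' c (sq_nonneg _)]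
    exact Real.sqrt_le_sqrt (reApplyInnerSelf_cfc_apply_le hrT hφ hrc v)

variable {α β p q p' q' M : ℝ}
  (hf : StrictConvexOn ℝ I f) (hfc : ContinuousOn f I)
  (hsa : ∀ i, IsSelfAdjoint (H i)) (hspec : ∀ i, spectrum ℝ (H i) ⊆ I)
  (hT : IsSelfAdjoint T) (hTspec : spectrum ℝ T ⊆ Set.Icc α β) (hI : Set.Icc α β ⊆ I)
  (hH : TendstoForm H l T) (hcfc : TendstoForm (fun i => cfc f (H i)) l (cfc f T))
include hf hfc hsa hspec hT hTspec hI hH hcfc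

lemma asymptoticallyLE_norm_cfc_apply_cell {κ u w : ℝ} (hκ : 0 < κ) (hu : u ∈ I) (hw : w ∈ I)
    (huw : u < w) (hsec : ∀ x ∈ I, x ∉ Set.Ioo p' q' → κ ≤ f x - secantLine f u w x)
    (hg : Continuous g) (hg0 : ∀ x ∈ Set.Ioo p' q', g x = 0)
    (hgM : ∀ i, ∀ x ∈ spectrum ℝ (H i), |g x| ≤ M)
    (hφ : Continuous φ) (hφ0 : ∀ x ∈ spectrum ℝ T, x ∉ Set.Icc u w → φ x = 0) (v : 𝓗) :
    AsymptoticallyLE l (fun i => ‖cfc g (H i) (cfc φ T v)‖)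
      (√(M ^ 2 / κ * midpointDefect f u w) * ‖cfc φ T v‖) := by
  have hr : TendstoForm (fun i =>
      cfc (fun x => M ^ 2 / κ * (f x - secantLine f u w x + midpointDefect f u w)) (H i)) l
      (cfc (fun x => M ^ 2 / κ * (f x - secantLine f u w x + midpointDefect f u w)) T) := by
    convert hH.cfc_affine hsa hT (fun i => hfc.mono (hspec i)) (hfc.mono (hTspec.trans hI)) hcfc
      (M ^ 2 / κ) (-(M ^ 2 / κ * slope f u w))
      (M ^ 2 / κ * (slope f u w * u - f u + midpointDefect f u w)) using 4 <;>
    · rw [secantLine]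
      ring
  have hrI : ContinuousOn
      (fun x => M ^ 2 / κ * (f x - secantLine f u w x + midpointDefect f u w)) I := by
    fun_prop
  refine asymptoticallyLE_norm_cfc_apply hr (fun i => hrI.mono (hspec i))
    (hrI.mono (hTspec.trans hI)) (fun i => hg.continuousOn) hφ.continuousOn
    (fun i x hx => ?_) (fun x hx hφx => ?_) v
  · have hdefect := midpointDefect_nonneg hf.convexOn hu hw
    by_cases hxpq : x ∈ Set.Ioo p' q'
    · have := secantLine_sub_midpointDefect_le hf.convexOn hu hw huw (hspec i hx)
      rw [hg0 x hxpq, zero_pow two_ne_zero]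
      exact mul_nonneg (by positivity) (by linarith)
    · calc g x ^ 2 ≤ M ^ 2 := sq_le_sq.2 ((hgM i x hx).trans (le_abs_self M))
        _ = M ^ 2 / κ * κ := by field_simp
        _ ≤ _ := by
          gcongr
          linarith [hsec x (hspec i hx) hxpq]
  · have hxuw : x ∈ Set.Icc u w := by_contra fun h => hφx (hφ0 x hx h)
    gcongr
    linarith [le_secantLine_of_mem_Icc hf.convexOn hu hw hxuw]

lemma asymptoticallyLE_norm_cfc_apply_of_sub_le {κ η u w : ℝ} {ψ : ℝ → ℝ} (hκ : 0 < κ)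
    (hsec : ∀ u ∈ I, ∀ w ∈ I, ∀ x ∈ I, u < w → p - η ≤ u → w ≤ q + η → x ∉ Set.Ioo p' q' →
      κ ≤ f x - secantLine f u w x)
    (hg : Continuous g) (hg0 : ∀ x ∈ Set.Ioo p' q', g x = 0)
    (hgM : ∀ i, ∀ x ∈ spectrum ℝ (H i), |g x| ≤ M)
    (hφ : Continuous φ) (hφ0 : ∀ x ∈ spectrum ℝ T, x ∉ Set.Icc p q → φ x = 0)
    (hu : u ∈ I) (hw : w ∈ I) (huw : u < w) (hη : w - u ≤ η)
    (hψ : Continuous ψ) (hψ0 : ∀ x ∈ spectrum ℝ T, x ∉ Set.Icc u w → ψ x = 0) (v : 𝓗) :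
    AsymptoticallyLE l (fun i => ‖cfc g (H i) (cfc ψ T (cfc φ T v))‖)
      (√(M ^ 2 / κ * midpointDefect f u w) * ‖cfc ψ T (cfc φ T v)‖) := by
  rw [← mul_apply_eq_comp, ← cfc_mul ψ φ T hψ.continuousOn hφ.continuousOn]
  by_cases hmeet : p ≤ w ∧ u ≤ q
  · refine asymptoticallyLE_norm_cfc_apply_cell hf hfc hsa hspec hT hTspec hI hH hcfc hκ hu hw huw
      (fun x hx => ?_) hg hg0 hgM (hψ.mul hφ) (fun x hx hxuw => ?_) v
    · exact hsec u hu w hw x hx huw (by linarith) (by linarith)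
    · exact mul_eq_zero_of_left (hψ0 x hx hxuw) _
  · have hzero : cfc (fun x => ψ x * φ x) T = 0 := by
      rw [cfc_congr (g := fun _ => 0) fun x hx => mul_eq_zero.2 ?_, cfc_const_zero]
      by_contra! h
      obtain ⟨hxu, hxw⟩ := by_contra fun h' => h.1 (hψ0 x hx h')
      obtain ⟨hpx, hxq⟩ := by_contra fun h' => h.2 (hφ0 x hx h')
      exact hmeet ⟨hpx.trans hxw, hxu.trans hxq⟩
    simpa [hzero] using AsymptoticallyLE.of_tendsto tendsto_const_nhds

lemma asymptoticallyLE_norm_cfc_apply_of_mesh_le {N : ℕ} {κ η : ℝ} (hαβ : α < β) (hN : 1 ≤ N)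
    (hmesh : 2 * ((β - α) / (N + 1)) ≤ η) (hκ : 0 < κ)
    (hsec : ∀ u ∈ I, ∀ w ∈ I, ∀ x ∈ I, u < w → p - η ≤ u → w ≤ q + η → x ∉ Set.Ioo p' q' →
      κ ≤ f x - secantLine f u w x)
    (hg : Continuous g) (hg0 : ∀ x ∈ Set.Ioo p' q', g x = 0)
    (hgM : ∀ i, ∀ x ∈ spectrum ℝ (H i), |g x| ≤ M)
    (hφ : Continuous φ) (hφ0 : ∀ x ∈ spectrum ℝ T, x ∉ Set.Icc p q → φ x = 0) (v : 𝓗) :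
    AsymptoticallyLE l (fun i => ‖cfc g (H i) (cfc φ T v)‖)
      (√(M ^ 2 / κ * ∑ j ∈ Finset.range N,
        midpointDefect f (node α β N j) (node α β N (j + 2))) * ‖cfc φ T v‖) := by
  obtain ⟨ψ, hψ, hsum, hsq, hsupp⟩ := exists_partition_node hαβ hN
  have hmem {j : ℕ} (hj : j ≤ N + 1) : node α β N j ∈ I := hI (node_mem_Icc hαβ.le hj)
  have hdefect (j) (hj : j ∈ Finset.range N) :
      0 ≤ midpointDefect f (node α β N j) (node α β N (j + 2)) :=
    midpointDefect_nonneg hf.convexOn (hmem (by grind)) (hmem (by grind))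
  have hglue := asymptoticallyLE_norm_apply_of_partition hT (fun j _ => (hψ j).continuousOn)
    (fun x _ => hsum x) (fun x _ => hsq x) (cfc φ T v) fun j hj =>
    asymptoticallyLE_norm_cfc_apply_of_sub_le hf hfc hsa hspec hT hTspec hI hH hcfc hκ hsec hg hg0
      hgM hφ hφ0 (hmem (by grind)) (hmem (by grind)) (node_lt_node hαβ (by lia))
      ((node_add_two_sub_node α β N j).trans_le hmesh) (hψ j)
      (fun x hx => hsupp j x (hTspec hx)) v
  rwa [Finset.sum_congr rfl fun j hj => Real.sq_sqrt (mul_nonneg (by positivity) (hdefect j hj)),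
    ← Finset.mul_sum] at hglue

lemma tendsto_cfc_apply_cfc_apply_zero (hαβ : α < β) (hp : p' < p) (hq : q < q')
    (hg : Continuous g) (hg0 : ∀ x ∈ Set.Ioo p' q', g x = 0)
    (hgM : ∀ i, ∀ x ∈ spectrum ℝ (H i), |g x| ≤ M)
    (hφ : Continuous φ) (hφ0 : ∀ x ∈ spectrum ℝ T, x ∉ Set.Icc p q → φ x = 0) (v : 𝓗) :
    Tendsto (fun i => cfc g (H i) (cfc φ T v)) l (𝓝 0) := by
  obtain ⟨η, hη, hηp, hηq⟩ : ∃ η > 0, p' < p - η ∧ q + η < q' := by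
    obtain ⟨η, hη, hlt⟩ := exists_between (lt_min (sub_pos.2 hp) (sub_pos.2 hq))
    rw [lt_min_iff] at hlt
    exact ⟨η, hη, by linarith, by linarith⟩
  obtain ⟨κ, hκ, hsec⟩ := exists_pos_forall_le_sub_secantLine hf hηp hηq
  have hmesh : Tendsto (fun N : ℕ => 2 * ((β - α) / (N + 1))) atTop (𝓝 0) := by
    simpa [div_eq_mul_inv] using
      (tendsto_one_div_add_atTop_nhds_zero_nat.const_mul (β - α)).const_mul 2
  refine AsymptoticallyLE.tendsto_zero (c := fun N => √(M ^ 2 / κ * ∑ j ∈ Finset.range N,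
    midpointDefect f (node α β N j) (node α β N (j + 2))) * ‖cfc φ T v‖) ?_ ?_
  · filter_upwards [eventually_ge_atTop 1, hmesh.eventually (ge_mem_nhds hη)] with N hN hNη
    exact asymptoticallyLE_norm_cfc_apply_of_mesh_le hf hfc hsa hspec hT hTspec hI hH hcfc hαβ hN
      hNη hκ hsec hg hg0 hgM hφ hφ0 v
  · simpa using ((tendsto_sum_midpointDefect_node hαβ.le (hfc.mono hI)).const_mul
      (M ^ 2 / κ)).sqrt.mul_const ‖cfc φ T v‖

lemma asymptoticallyLE_norm_sub_apply (hαβ : α < β) {C δ : ℝ} (hC : ∀ i, ‖H i‖ ≤ C) (hδ : 0 < δ)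
    (hφ : Continuous φ) (hφ0 : ∀ x ∈ spectrum ℝ T, x ∉ Set.Icc p (p + δ) → φ x = 0) (v : 𝓗) :
    AsymptoticallyLE l (fun i => ‖(H i - T) (cfc φ T v)‖) (3 * δ * ‖cfc φ T v‖) := by
  let clip (x : ℝ) : ℝ := max (-(2 * δ)) (min (2 * δ) (x - p))
  have hclip : Continuous clip := by fun_prop
  have hclip_le (x : ℝ) : |clip x| ≤ 2 * δ :=
    abs_le.2 ⟨le_max_left _ _, max_le (by linarith) (min_le_left _ _)⟩
  have hclip_eq (x) (hx : x ∈ Set.Ioo (p - 2 * δ) (p + 2 * δ)) : x - p - clip x = 0 := by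
    simp only [clip]
    rw [min_eq_right (by linarith [hx.2]), max_eq_right (by linarith [hx.1]), sub_self]
  have htail_le (i) (x) (hx : x ∈ spectrum ℝ (H i)) : |x - p - clip x| ≤ C + |p| + 2 * δ := by
    have hxC : |x| ≤ C := (abs_le_norm_of_mem_spectrum hx).trans (hC i)
    linarith [abs_sub (x - p) (clip x), abs_sub x p, hclip_le x]
  have htail := tendsto_cfc_apply_cfc_apply_zero hf hfc hsa hspec hT hTspec hI hH hcfc hαβ
    (by linarith) (by linarith) (by fun_prop) hclip_eq htail_le hφ hφ0 v
  have hT_le : ‖cfc (fun x => x - p) T (cfc φ T v)‖ ≤ δ * ‖cfc φ T v‖ := by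
    refine norm_cfc_apply_cfc_apply_le (by fun_prop) hφ.continuousOn hδ.le (fun x hx hφx => ?_) v
    obtain ⟨hpx, hxp⟩ := by_contra fun h => hφx (hφ0 x hx h)
    exact abs_le.2 ⟨by linarith, by linarith⟩
  have hlim := htail.norm.add_const (3 * δ * ‖cfc φ T v‖)
  rw [norm_zero, zero_add] at hlim
  refine (AsymptoticallyLE.of_tendsto hlim).of_le fun i => ?_
  have hH_le : ‖cfc clip (H i) (cfc φ T v)‖ ≤ 2 * δ * ‖cfc φ T v‖ :=
    (cfc clip (H i)).le_of_opNorm_le (norm_cfc_le (by positivity) fun x _ => hclip_le x) _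
  rw [sub_eq_cfc_add_cfc_sub_cfc (hsa i) hT hclip.continuousOn p, sub_apply, add_apply]
  refine (norm_sub_le _ _).trans ?_
  linarith [norm_add_le (cfc (fun x => x - p - clip x) (H i) (cfc φ T v))
    (cfc clip (H i) (cfc φ T v))]

lemma asymptoticallyLE_norm_sub_apply_of_mesh {N : ℕ} (hN : 1 ≤ N) (hαβ : α < β) {C : ℝ}
    (hC : ∀ i, ‖H i‖ ≤ C) (v : 𝓗) :
    AsymptoticallyLE l (fun i => ‖(H i - T) v‖) (6 * (β - α) * √(1 / (N + 1)) * ‖v‖) := by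
  obtain ⟨ψ, hψ, hsum, hsq, hsupp⟩ := exists_partition_node hαβ hN
  have hβα := sub_pos.2 hαβ
  have hcell (j) (_ : j ∈ Finset.range N) :=
    asymptoticallyLE_norm_sub_apply hf hfc hsa hspec hT hTspec hI hH hcfc hαβ hC
      (p := node α β N j) (δ := 2 * ((β - α) / (N + 1))) (by positivity) (hψ j)
      (fun x hx hxj => hsupp j x (hTspec hx) <| by
        rwa [← node_add_two_sub_node α β N j, add_sub_cancel] at hxj) v
  refine (asymptoticallyLE_norm_apply_of_partition hT (fun j _ => (hψ j).continuousOn)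
    (fun x _ => hsum x) (fun x _ => hsq x) v hcell).mono ?_
  gcongr
  rw [← Real.sqrt_sq (by positivity : 0 ≤ 6 * (β - α)), ← Real.sqrt_mul (sq_nonneg _)]
  refine Real.sqrt_le_sqrt ?_
  calc ∑ j ∈ Finset.range N, (3 * (2 * ((β - α) / (N + 1)))) ^ 2
      = (6 * (β - α)) ^ 2 * (1 / (N + 1)) * (N / (N + 1)) := by
        rw [Finset.sum_const, Finset.card_range, nsmul_eq_mul]
        field_simp
        ring
    _ ≤ (6 * (β - α)) ^ 2 * (1 / (N + 1)) :=
        mul_le_of_le_one_right (by positivity) (div_le_one_of_le₀ (by linarith) (by positivity))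

theorem tendsto_apply_of_tendstoForm_cfc (hαβ : α < β) {C : ℝ} (hC : ∀ i, ‖H i‖ ≤ C) (v : 𝓗) :
    Tendsto (fun i => H i v) l (𝓝 (T v)) := by
  have hlim : Tendsto (fun N : ℕ => 6 * (β - α) * √(1 / ((N : ℝ) + 1)) * ‖v‖) atTop (𝓝 0) := by
    simpa using (tendsto_one_div_add_atTop_nhds_zero_nat.sqrt.const_mul
      (6 * (β - α))).mul_const ‖v‖
  refine tendsto_sub_nhds_zero_iff.1 (AsymptoticallyLE.tendsto_zero ?_ hlim)
  filter_upwards [eventually_ge_atTop 1] with N hN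
  exact asymptoticallyLE_norm_sub_apply_of_mesh hf hfc hsa hspec hT hTspec hI hH hcfc hN hαβ hC v

end StrongConvergence

/-- **Theorem 2.1 (second part).** If moreover the net `(Hᵢ)` is bounded in operator
norm, then `(Hᵢ)` converges strongly to `H`. -/
theorem stmt_4 {𝓗 : Type*} [NormedAddCommGroup 𝓗] [InnerProductSpace ℂ 𝓗]
    [CompleteSpace 𝓗]
    {ι : Type*} (l : Filter ι) [l.NeBot]
    (I : Set ℝ) (hI : I.OrdConnected)
    (f : ℝ → ℝ) (hf : StrictConvexOn ℝ I f) (hfc : ContinuousOn f I)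
    (H : ι → 𝓗 →L[ℂ] 𝓗) (hsa : ∀ i, IsSelfAdjoint (H i))
    (hspec : ∀ i, spectrum ℝ (H i) ⊆ I)
    (hbdd : ∃ C : ℝ, ∀ i, ‖H i‖ ≤ C)
    (T : 𝓗 →L[ℂ] 𝓗) (hTsa : IsSelfAdjoint T) (hTspec : spectrum ℝ T ⊆ I)
    (hWOT : ∀ v w : 𝓗, Tendsto (fun i => ⟪(H i) v, w⟫_ℂ) l (𝓝 ⟪T v, w⟫_ℂ))
    (hfWOT : ∀ v w : 𝓗,
      Tendsto (fun i => ⟪(cfc f (H i)) v, w⟫_ℂ) l (𝓝 ⟪(cfc f T) v, w⟫_ℂ)) :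
    ∀ v : 𝓗, Tendsto (fun i => (H i) v) l (𝓝 (T v)) := by
  intro v
  rcases I.subsingleton_or_nontrivial with hsub | hnt
  · have heq (i : ι) : H i = T :=
      eq_of_spectrum_subset_subsingleton (hsa i) hTsa hsub (hspec i) hTspec
    simp only [heq, tendsto_const_nhds]
  · obtain ⟨α, β, hαβ, hαβI, hTαβ⟩ :=
      exists_lt_Icc_subset_of_isCompact hI hnt (spectrum.isCompact T) hTspec
    obtain ⟨C, hC⟩ := hbdd
    exact tendsto_apply_of_tendstoForm_cfc hf hfc hsa hspec hTsa hTαβ hαβI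
      (tendstoForm_of_tendsto_inner hWOT) (tendstoForm_of_tendsto_inner hfWOT) hαβ hC v
end

section
/- Let f be a strictly convex continuous real-valued function on an interval I ⊆ ℝ, let a, x, y ∈ I with a < x < y, let ℓ be the affine function with ℓ(a) = f(a) and ℓ(x) = f(x), and set g = f − ℓ. Let γ = −(the minimum of g on [a, x]) and β = g(y). Then γ > 0, the minimum of g on [a,x] is attained at some c with a < c < x, β > 0, and γ/β ≤ (x − a)/(y − x). -/
set_option synthInstance.maxHeartbeats 400000
set_option maxHeartbeats 800000

/-! The function `g = f - ℓ` is still strictly convex and vanishes at `a` and `x`, so the interior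
extremum `c` provided by Rolle's argument must be a minimum, with `g c < 0`. The ratio bound
compares the slopes of `g` on the two sides of its zero `x`: the slope over `[c, x]` is
`γ / (x - c)`, the slope over `[x, y]` is `β / (y - x)`, and `x - c ≤ x - a`. -/

open Set

theorem concaveOn_mul_add_const {R : Type*} [CommSemiring R] [PartialOrder R]
    [IsOrderedAddMonoid R] {s : Set R} (hs : Convex R s) (α δ : R) :
    ConcaveOn R s (fun z ↦ α * z + δ) :=
  ((LinearMap.mulLeft R α).concaveOn hs).add_const δ

section LinearOrderedField

variable {𝕜 : Type*} [Field 𝕜] [LinearOrder 𝕜] [IsStrictOrderedRing 𝕜] {s : Set 𝕜} {a b c : 𝕜}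

section Codomain

variable {β : Type*} [AddCommMonoid β] [LinearOrder β] [IsOrderedAddMonoid β] [Module 𝕜 β]
  [PosSMulStrictMono 𝕜 β] {f : 𝕜 → β}

theorem lt_max_of_strictConvexOn (hf : StrictConvexOn 𝕜 s f) (ha : a ∈ s) (hc : c ∈ s)
    (hab : a < b) (hbc : b < c) : f b < max (f a) (f c) :=
  hf.lt_on_openSegment ha hc (hab.trans hbc).ne <|
    (openSegment_eq_Ioo (hab.trans hbc)).symm ▸ ⟨hab, hbc⟩

theorem lt_left_of_strictConvexOn_of_right_le_left (hf : StrictConvexOn 𝕜 s f) (ha : a ∈ s)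
    (hc : c ∈ s) (hab : a < b) (hbc : b < c) (hfca : f c ≤ f a) : f b < f a :=
  (lt_max_of_strictConvexOn hf ha hc hab hbc).trans_eq (max_eq_left hfca)

theorem lt_right_of_strictConvexOn_of_left_le (hf : StrictConvexOn 𝕜 s f) (ha : a ∈ s)
    (hc : c ∈ s) (hab : a < b) (hbc : b < c) (hfab : f a ≤ f b) : f b < f c :=
  (lt_max_iff.1 (lt_max_of_strictConvexOn hf ha hc hab hbc)).resolve_left hfab.not_gt

end Codomain

theorem sub_div_sub_le_of_convexOn {f : 𝕜 → 𝕜} (hf : ConvexOn 𝕜 s f) (ha : a ∈ s) (hc : c ∈ s)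
    (hab : a < b) (hbc : b < c) (hfbc : f b < f c) :
    (f b - f a) / (f c - f b) ≤ (b - a) / (c - b) := by
  have hslope : (f b - f a) / (b - a) ≤ (f c - f b) / (c - b) :=
    hf.slope_mono_adjacent ha hc hab hbc
  rw [div_le_div_iff₀ (sub_pos.2 hab) (sub_pos.2 hbc)] at hslope
  rwa [div_le_div_iff₀ (sub_pos.2 hfbc) (sub_pos.2 hbc), mul_comm (b - a)]

end LinearOrderedField

theorem exists_mem_Ioo_isMinOn_of_strictConvexOn {β : Type*} [AddCommMonoid β] [LinearOrder β]
    [IsOrderedAddMonoid β] [Module ℝ β] [PosSMulStrictMono ℝ β] [TopologicalSpace β]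
    [OrderTopology β] {f : ℝ → β} {a b : ℝ} (hf : StrictConvexOn ℝ (Icc a b) f)
    (hfc : ContinuousOn f (Icc a b)) (hab : a < b) (hfab : f a = f b) :
    ∃ c ∈ Ioo a b, IsMinOn f (Icc a b) c := by
  have ha : a ∈ Icc a b := left_mem_Icc.2 hab.le
  have hb : b ∈ Icc a b := right_mem_Icc.2 hab.le
  obtain ⟨c, hc, hmin | hmax⟩ := exists_Ioo_extr_on_Icc hab hfc hfab
  · exact ⟨c, hc, hmin⟩
  · exact absurd (hmax ha) <| not_le_of_gt <|
      lt_left_of_strictConvexOn_of_right_le_left hf ha hb hc.1 hc.2 hfab.ge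

/-- **Lemma 2.2 (key computation).** Let `f` be strictly convex and continuous on an
interval `I`, let `a < x < y` in `I`, let `ℓ` be the affine function with `ℓ(a) = f(a)`
and `ℓ(x) = f(x)`, and set `g = f − ℓ`.  Then the minimum `−γ` of `g` on `[a, x]` is
attained at some `c ∈ (a, x)`, `γ > 0`, `β = g(y) > 0`, and `γ/β ≤ (x − a)/(y − x)`. -/
theorem stmt_6 (I : Set ℝ) (hI : I.OrdConnected)
    (f : ℝ → ℝ) (hf : StrictConvexOn ℝ I f) (hfc : ContinuousOn f I)
    (a x y : ℝ) (ha : a ∈ I) (hx : x ∈ I) (hy : y ∈ I)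
    (hax : a < x) (hxy : x < y)
    (ℓ : ℝ → ℝ) (hℓ : ∃ α δ : ℝ, ∀ z, ℓ z = α * z + δ)
    (hℓa : ℓ a = f a) (hℓx : ℓ x = f x) :
    ∃ c ∈ Set.Ioo a x, IsMinOn (fun z => f z - ℓ z) (Set.Icc a x) c ∧
      0 < -(f c - ℓ c) ∧ 0 < f y - ℓ y ∧
      (-(f c - ℓ c)) / (f y - ℓ y) ≤ (x - a) / (y - x) := by
  obtain ⟨α, δ, hαδ⟩ := hℓ
  obtain rfl : ℓ = fun z ↦ α * z + δ := funext hαδ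
  set g : ℝ → ℝ := fun z ↦ f z - (α * z + δ)
  have hga : g a = 0 := sub_eq_zero.2 hℓa.symm
  have hgx : g x = 0 := sub_eq_zero.2 hℓx.symm
  have hg : StrictConvexOn ℝ I g := hf.sub_concaveOn (concaveOn_mul_add_const hf.1 α δ)
  have hg_cont : ContinuousOn g I := hfc.sub (by fun_prop)
  have haxI : Icc a x ⊆ I := hI.out ha hx
  obtain ⟨c, hc, hmin⟩ := exists_mem_Ioo_isMinOn_of_strictConvexOn
    (hg.subset haxI (convex_Icc a x)) (hg_cont.mono haxI) hax (hga.trans hgx.symm)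
  have hcI : c ∈ I := haxI (Ioo_subset_Icc_self hc)
  have hgc_neg : g c < 0 := hga ▸
    lt_left_of_strictConvexOn_of_right_le_left hg ha hx hc.1 hc.2 (hgx.trans hga.symm).le
  have hgy_pos : 0 < g y := hgx ▸
    lt_right_of_strictConvexOn_of_left_le hg ha hy hax hxy (hga.trans hgx.symm).le
  refine ⟨c, hc, hmin, neg_pos.2 hgc_neg, hgy_pos, ?_⟩
  calc -g c / g y = (g x - g c) / (g y - g x) := by rw [hgx, zero_sub, sub_zero]
    _ ≤ (x - c) / (y - x) :=
      sub_div_sub_le_of_convexOn hg.convexOn hcI hy hc.2 hxy (hgx.symm ▸ hgy_pos)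
    _ ≤ (x - a) / (y - x) := div_le_div_of_nonneg_right
      (sub_le_sub_left hc.1.le x) (sub_nonneg.2 hxy.le)
end
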